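/- Let (x̂_i, ζ_i, ϑ_i) be a sequence with x̂_i ∈ PL(𝒫_i, ℝⁿ), ζ_i ∈ ℝ^q and ϑ_i ∈ S such that lim_{i→∞} (‖x̂_i − x‖_{W²} + |ζ_i − z₀| + |ϑ_i − θ|) = 0 for some x ∈ W²_n, z₀ ∈ ℝ^q and θ ∈ S. Then lim_{i→∞} ℓ̂_i(x̂_i, ζ_i, ϑ_i) = ℓ(x, z₀, θ) in ℝ̄. -/

import Mathlib

open MeasureTheory Filter Set

/-- `ln` with values in `ℝ̄ = EReal` and `ln 0 := −∞`. -/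
noncomputable def elog (r : ℝ) : EReal := if r ≤ 0 then ⊥ else ((Real.log r : ℝ) : EReal)

open scoped Topology NNReal ENNReal

/-!
Convergence in `W²` gives uniform convergence of `x̂_i` to `x` and `L²` convergence of the
derivatives. The residual of `z` in the implicit trapezoidal rule driven by `x̂_i` tends to `0`
uniformly, so a discrete Grönwall inequality gives uniform convergence of `ẑ_i` to `z`; continuous
functions of these paths then converge uniformly as well. Since the derivative of `x̂_i` is constant
on the cells, the discrete energy is the squared `L²` norm of a step function, which converges in
`L²` to the residual `f - ẋ`. As the derivative of `det` at `1` is the trace,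
`log det (1 + B) = tr B + o(B)`, so the sum of the `ln det` terms is eventually real and differs by
`o(1)` from a Riemann sum of `-½ div f`. The likelihood and prior terms converge because `elog` is
continuous, and since it never takes the value `+∞`, addition in `EReal` is continuous at the limit
even where a logarithm is `-∞`.
-/

theorem elog_eq_log_ofReal (r : ℝ) : elog r = ENNReal.log (ENNReal.ofReal r) := by
  rcases le_or_gt r 0 with hr | hr
  · simp [elog, hr, ENNReal.ofReal_of_nonpos]
  · simp [elog, hr.not_ge, ENNReal.log_ofReal_of_pos hr]

theorem continuous_elog : Continuous elog := by
  simpa only [← elog_eq_log_ofReal, Function.comp_def] using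
    ENNReal.continuous_log.comp ENNReal.continuous_ofReal

theorem elog_ne_top (r : ℝ) : elog r ≠ ⊤ := by
  rw [elog_eq_log_ofReal, Ne, ENNReal.log_eq_top_iff]
  exact ENNReal.ofReal_ne_top

theorem elog_of_pos {r : ℝ} (hr : 0 < r) : elog r = (Real.log r : ℝ) := if_neg hr.not_ge

theorem sum_elog_of_pos {ι : Type*} {s : Finset ι} {r : ι → ℝ} (hr : ∀ i ∈ s, 0 < r i) :
    ∑ i ∈ s, elog (r i) = (∑ i ∈ s, Real.log (r i) : ℝ) := by
  rw [Finset.sum_congr rfl fun i hi => elog_of_pos (hr i hi)]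
  exact (map_sum (⟨⟨Real.toEReal, EReal.coe_zero⟩, EReal.coe_add⟩ : ℝ →+ EReal) _ _).symm

section Determinant

theorem basis_det_update_self {R M ι : Type*} [CommRing R] [AddCommGroup M] [Module R M]
    [Fintype ι] [DecidableEq ι] (b : Module.Basis ι R M) (j : ι) (w : M) :
    b.det (Function.update b j w) = b.repr w j := by
  rw [b.det_apply, b.toMatrix_update, b.toMatrix_self, ← Matrix.cramer_apply, Matrix.cramer_one,
    Module.End.one_apply]

variable {𝕜 E : Type*} [NontriviallyNormedField 𝕜] [CompleteSpace 𝕜] [NormedAddCommGroup E]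
  [NormedSpace 𝕜 E] [FiniteDimensional 𝕜 E]

variable (𝕜 E) in
/-- The trace of endomorphisms of a finite-dimensional space, as a continuous linear form. -/
noncomputable def traceCLM : (E →L[𝕜] E) →L[𝕜] 𝕜 :=
  LinearMap.toContinuousLinearMap (LinearMap.trace 𝕜 E ∘ₗ ContinuousLinearMap.coeLM 𝕜)

theorem traceCLM_apply (A : E →L[𝕜] E) : traceCLM 𝕜 E A = LinearMap.trace 𝕜 E A := rfl

/-- The determinant of families of vectors in a basis `b`, as a continuous multilinear map. -/
noncomputable def basisDetCMM {ι : Type*} [Fintype ι] [DecidableEq ι] (b : Module.Basis ι 𝕜 E) :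
    ContinuousMultilinearMap 𝕜 (fun _ : ι => E) 𝕜 where
  toMultilinearMap := b.det.toMultilinearMap
  cont := Continuous.matrix_det <| continuous_matrix fun i j =>
    (b.coord i).continuous_of_finiteDimensional.comp (continuous_apply j)

theorem hasFDerivAt_det_one :
    HasFDerivAt (fun A : E →L[𝕜] E => A.det) (traceCLM 𝕜 E) 1 := by
  let b := Module.finBasis 𝕜 E
  let columns : (E →L[𝕜] E) →L[𝕜] (Fin (Module.finrank 𝕜 E) → E) :=
    ContinuousLinearMap.pi fun j => ContinuousLinearMap.apply 𝕜 E (b j)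
  have det_eq (A : E →L[𝕜] E) : A.det = basisDetCMM b (columns A) := by
    have det_comp := b.det_comp (A : E →ₗ[𝕜] E) b
    rw [b.det_self, mul_one] at det_comp
    exact det_comp.symm
  have trace_eq : traceCLM 𝕜 E = ((basisDetCMM b).linearDeriv (columns 1)).comp columns := by
    ext A
    rw [traceCLM_apply, LinearMap.trace_eq_matrix_trace 𝕜 b, ContinuousLinearMap.comp_apply,
      ContinuousMultilinearMap.linearDeriv_apply]
    refine Finset.sum_congr rfl fun j _ => ?_
    rw [Matrix.diag_apply, LinearMap.toMatrix_apply]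
    exact (basis_det_update_self b j (A (b j))).symm
  simp only [det_eq, trace_eq]
  exact ((basisDetCMM b).hasFDerivAt _).comp _ columns.hasFDerivAt

end Determinant

theorem eventually_det_one_add_pos {E : Type*} [NormedAddCommGroup E] [NormedSpace ℝ E] :
    ∀ᶠ B in 𝓝 (0 : E →L[ℝ] E), 0 < (1 + B).det := by
  have det_continuous : Continuous fun B : E →L[ℝ] E => (1 + B).det :=
    ContinuousLinearMap.continuous_det.comp (continuous_const.add continuous_id)
  refine (det_continuous.tendsto 0).eventually_const_lt ?_
  rw [add_zero]
  exact one_pos.trans_eq LinearMap.det_id.symm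

theorem log_det_one_add_sub_trace_isLittleO {E : Type*} [NormedAddCommGroup E] [NormedSpace ℝ E]
    [FiniteDimensional ℝ E] :
    (fun B : E →L[ℝ] E => Real.log (1 + B).det - traceCLM ℝ E B) =o[𝓝 0] fun B => B := by
  have det_one : (1 : E →L[ℝ] E).det = 1 := LinearMap.det_id
  have deriv_log := (hasFDerivAt_det_one (𝕜 := ℝ) (E := E)).log (det_one.trans_ne one_ne_zero)
  rw [hasFDerivAt_iff_isLittleO_nhds_zero] at deriv_log
  simpa only [det_one, Real.log_one, sub_zero, inv_one, one_smul] using deriv_log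

/-- The points `t 0 < t 1 < ⋯ < t N` form a partition of `[a, b]`. Only the values of `t` at
indices `k ≤ N` are constrained. -/
structure IsPartition (t : ℕ → ℝ) (N : ℕ) (a b : ℝ) : Prop where
  left_eq : t 0 = a
  right_eq : t N = b
  lt_succ : ∀ k < N, t k < t (k + 1)

/-- The largest step of the points `t 0, …, t N`; it is `0` for `N = 0`. -/
noncomputable def mesh (t : ℕ → ℝ) (N : ℕ) : ℝ := ⨆ k : Fin N, (t (k.1 + 1) - t k.1)

/-- The index `k` of the cell `(t k, t (k + 1)]` that contains `s`. A family of vectors `c` indexed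
by the cells becomes a step function as `fun s => c (cellIndex t s)`. -/
noncomputable def cellIndex (t : ℕ → ℝ) (s : ℝ) : ℕ := sInf {k | s ≤ t (k + 1)}

theorem sub_le_mesh (t : ℕ → ℝ) {N k : ℕ} (hk : k < N) : t (k + 1) - t k ≤ mesh t N :=
  le_ciSup (f := fun k : Fin N => t (k.1 + 1) - t k.1) (finite_range _).bddAbove ⟨k, hk⟩

namespace IsPartition

variable {t : ℕ → ℝ} {N : ℕ} {a b : ℝ}

theorem le_of_le (ht : IsPartition t N a b) {j k : ℕ} (hjk : j ≤ k) (hk : k ≤ N) : t j ≤ t k := by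
  induction k, hjk using Nat.le_induction with
  | base => exact le_rfl
  | succ k _ ih => exact (ih (by lia)).trans (ht.lt_succ k (by lia)).le

theorem mem_Icc (ht : IsPartition t N a b) {k : ℕ} (hk : k ≤ N) : t k ∈ Icc a b :=
  ⟨ht.left_eq ▸ ht.le_of_le k.zero_le hk, ht.right_eq ▸ ht.le_of_le hk le_rfl⟩

theorem left_le_right (ht : IsPartition t N a b) : a ≤ b :=
  (ht.mem_Icc le_rfl).1.trans (ht.mem_Icc le_rfl).2

theorem mem_Ioc_of_mem_cell (ht : IsPartition t N a b) {k : ℕ} (hk : k < N) {s : ℝ}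
    (hs : s ∈ Ioc (t k) (t (k + 1))) : s ∈ Ioc a b :=
  ⟨(ht.mem_Icc hk.le).1.trans_lt hs.1, hs.2.trans (ht.mem_Icc hk).2⟩

theorem cellIndex_eq (ht : IsPartition t N a b) {k : ℕ} (hk : k < N) {s : ℝ}
    (hs : s ∈ Ioc (t k) (t (k + 1))) : cellIndex t s = k := by
  refine le_antisymm (Nat.sInf_le hs.2) (le_csInf ⟨k, hs.2⟩ fun j hj => ?_)
  by_contra! hjk
  exact (hs.1.trans_le hj).not_ge (ht.le_of_le hjk hk.le)

theorem exists_mem_cell (ht : IsPartition t N a b) {s : ℝ} (hs : s ∈ Ioc a b) :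
    ∃ k < N, s ∈ Ioc (t k) (t (k + 1)) := by
  have hs_iUnion := Ioc_subset_biUnion_Ioc N t (by rwa [ht.left_eq, ht.right_eq])
  simpa only [mem_iUnion, Finset.mem_range, exists_prop] using hs_iUnion

theorem cellIndex_lt (ht : IsPartition t N a b) {s : ℝ} (hs : s ∈ Ioc a b) :
    cellIndex t s < N := by
  obtain ⟨k, hk, hsk⟩ := ht.exists_mem_cell hs
  rwa [ht.cellIndex_eq hk hsk]

theorem mem_cell_cellIndex (ht : IsPartition t N a b) {s : ℝ} (hs : s ∈ Ioc a b) :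
    s ∈ Ioc (t (cellIndex t s)) (t (cellIndex t s + 1)) := by
  obtain ⟨k, hk, hsk⟩ := ht.exists_mem_cell hs
  rwa [ht.cellIndex_eq hk hsk]

theorem sum_sub_eq (ht : IsPartition t N a b) :
    ∑ k ∈ Finset.range N, (t (k + 1) - t k) = b - a := by
  rw [Finset.sum_range_sub, ht.left_eq, ht.right_eq]

section StepFunction

theorem cellIndex_eqOn_uIoc {Y : Type*} (ht : IsPartition t N a b) (c : ℕ → Y) {k : ℕ}
    (hk : k < N) : EqOn (fun _ => c k) (fun s => c (cellIndex t s)) (uIoc (t k) (t (k + 1))) := by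
  intro s hs
  rw [uIoc_of_le (ht.lt_succ k hk).le] at hs
  exact congrArg c (ht.cellIndex_eq hk hs).symm

variable {E : Type*} [NormedAddCommGroup E]

theorem intervalIntegrable_cellIndex (ht : IsPartition t N a b) (c : ℕ → E) {k : ℕ} (hk : k < N) :
    IntervalIntegrable (fun s => c (cellIndex t s)) volume (t k) (t (k + 1)) :=
  intervalIntegrable_const.congr (ht.cellIndex_eqOn_uIoc c hk)

theorem integrableOn_cellIndex (ht : IsPartition t N a b) (c : ℕ → E) :
    IntegrableOn (fun s => c (cellIndex t s)) (Ioc a b) := by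
  rw [← intervalIntegrable_iff_integrableOn_Ioc_of_le ht.left_le_right, ← ht.left_eq,
    ← ht.right_eq]
  exact .trans_iterate fun k hk => ht.intervalIntegrable_cellIndex c hk

theorem memLp_two_cellIndex (ht : IsPartition t N a b) (c : ℕ → E) :
    MemLp (fun s => c (cellIndex t s)) 2 (volume.restrict (Ioc a b)) :=
  (memLp_two_iff_integrable_sq_norm (ht.integrableOn_cellIndex c).aestronglyMeasurable).2
    (ht.integrableOn_cellIndex fun k => ‖c k‖ ^ 2)

theorem sum_smul_eq_integral_cellIndex [NormedSpace ℝ E] [CompleteSpace E]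
    (ht : IsPartition t N a b) (c : ℕ → E) :
    ∑ k ∈ Finset.range N, (t (k + 1) - t k) • c k = ∫ s in Ioc a b, c (cellIndex t s) := by
  rw [← intervalIntegral.integral_of_le ht.left_le_right, ← ht.left_eq, ← ht.right_eq,
    ← intervalIntegral.sum_integral_adjacent_intervals (a := t) fun k hk =>
      ht.intervalIntegrable_cellIndex c hk]
  refine Finset.sum_congr rfl fun k hk => ?_
  rw [← intervalIntegral.integral_const]
  exact intervalIntegral.integral_congr_ae
    (.of_forall (ht.cellIndex_eqOn_uIoc c (Finset.mem_range.1 hk)))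

end StepFunction

end IsPartition

/-- `v` is constant on each cell `[t k, t (k + 1))`; the derivative of a piecewise linear path is
represented in this way. -/
def IsConstOnCells {Y : Type*} (t : ℕ → ℝ) (N : ℕ) (v : ℝ → Y) : Prop :=
  ∀ k < N, ∃ c, ∀ s ∈ Ico (t k) (t (k + 1)), v s = c

/-- `x` is the absolutely continuous path on `[a, b]` with initial value `x₀` and derivative `v`. -/
def IsPrimitiveOn {E : Type*} [NormedAddCommGroup E] [NormedSpace ℝ E] (a b : ℝ) (x₀ : E)
    (v x : ℝ → E) : Prop :=
  ∀ s ∈ Icc a b, x s = x₀ + ∫ u in Ioc a s, v u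

/-- `y` is affine on each cell, with slope the mean of the values of `v` at the two ends of the
cell: the path produced by the trapezoidal rule. The rule is implicit when `v` depends on `y`. -/
def IsTrapezoidPath {E : Type*} [NormedAddCommGroup E] [NormedSpace ℝ E] (t : ℕ → ℝ) (N : ℕ)
    (v y : ℝ → E) : Prop :=
  ∀ k < N, ∀ s ∈ Ioc (t k) (t (k + 1)),
    y s = y (t k) + ((s - t k) / 2) • (v (t k) + v (t (k + 1)))

section Paths

variable {E : Type*} [NormedAddCommGroup E] {t : ℕ → ℝ} {N : ℕ} {a b : ℝ}

theorem IsConstOnCells.eq_left {Y : Type*} {v : ℝ → Y} (hv : IsConstOnCells t N v) {k : ℕ}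
    (hk : k < N) {s : ℝ} (hs : s ∈ Ico (t k) (t (k + 1))) : v s = v (t k) := by
  obtain ⟨c, hc⟩ := hv k hk
  rw [hc s hs, hc (t k) ⟨le_rfl, hs.1.trans_lt hs.2⟩]

theorem IsConstOnCells.ae_eq_cellIndex {Y : Type*} {v : ℝ → Y} (hv : IsConstOnCells t N v)
    (ht : IsPartition t N a b) :
    v =ᵐ[volume.restrict (Ioc a b)] fun s => v (t (cellIndex t s)) := by
  filter_upwards [ae_restrict_mem measurableSet_Ioc,
    ae_restrict_of_ae ((countable_range t).ae_notMem volume)] with s hs hs_node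
  have hs_cell := ht.mem_cell_cellIndex hs
  exact hv.eq_left (ht.cellIndex_lt hs)
    ⟨hs_cell.1.le, hs_cell.2.lt_of_ne fun h => hs_node ⟨_, h.symm⟩⟩

theorem IsConstOnCells.memLp_two {v : ℝ → E} (hv : IsConstOnCells t N v)
    (ht : IsPartition t N a b) : MemLp v 2 (volume.restrict (Ioc a b)) :=
  (memLp_congr_ae (hv.ae_eq_cellIndex ht)).2 (ht.memLp_two_cellIndex fun k => v (t k))

variable [NormedSpace ℝ E]

theorem IsPrimitiveOn.left_eq {x₀ : E} {v x : ℝ → E} (hx : IsPrimitiveOn a b x₀ v x)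
    (hab : a ≤ b) : x a = x₀ := by
  rw [hx a (left_mem_Icc.2 hab), Ioc_self, setIntegral_empty, add_zero]

theorem IsPrimitiveOn.continuousOn {x₀ : E} {v x : ℝ → E} (hx : IsPrimitiveOn a b x₀ v x)
    (hv : IntegrableOn v (Ioc a b)) : ContinuousOn x (Icc a b) :=
  (continuousOn_const.add (intervalIntegral.continuousOn_primitive
    ((integrableOn_Icc_iff_integrableOn_Ioc).2 hv))).congr hx

theorem IsPrimitiveOn.sub_eq_integral {x₀ : E} {v x : ℝ → E} (hx : IsPrimitiveOn a b x₀ v x)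
    (hv : IntegrableOn v (Ioc a b)) {r s : ℝ} (hr : r ∈ Icc a b) (hs : s ∈ Icc a b) :
    x s - x r = ∫ u in r..s, v u := by
  have integrable_to {u : ℝ} (hu : u ∈ Icc a b) : IntervalIntegrable v volume a u :=
    (intervalIntegrable_iff_integrableOn_Ioc_of_le hu.1).2
      (hv.mono_set (Ioc_subset_Ioc_right hu.2))
  rw [hx s hs, hx r hr, ← intervalIntegral.integral_of_le hs.1,
    ← intervalIntegral.integral_of_le hr.1, add_sub_add_left_eq_sub,
    intervalIntegral.integral_interval_sub_left (integrable_to hs) (integrable_to hr)]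

theorem IsPrimitiveOn.slope_eq_of_isConstOnCells [CompleteSpace E] {x₀ : E} {v x : ℝ → E}
    (hx : IsPrimitiveOn a b x₀ v x) (ht : IsPartition t N a b) (hv : IsConstOnCells t N v)
    {k : ℕ} (hk : k < N) : (t (k + 1) - t k)⁻¹ • (x (t (k + 1)) - x (t k)) = v (t k) := by
  have hlt := ht.lt_succ k hk
  have eqOn_cell : EqOn v (fun _ => v (t k)) (Ioo (t k) (t (k + 1))) :=
    fun s hs => hv.eq_left hk ⟨hs.1.le, hs.2⟩
  rw [hx.sub_eq_integral ((hv.memLp_two ht).integrable one_le_two) (ht.mem_Icc hk.le)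
      (ht.mem_Icc hk), intervalIntegral.integral_congr_Ioo_of_le hlt.le eqOn_cell,
    intervalIntegral.integral_const, inv_smul_smul₀ (sub_pos.2 hlt).ne']

theorem IsTrapezoidPath.continuousOn {v y : ℝ → E} (hy : IsTrapezoidPath t N v y)
    (ht : IsPartition t N a b) : ContinuousOn y (Icc a b) := by
  have continuousOn_cell {k : ℕ} (hk : k < N) : ContinuousOn y (Icc (t k) (t (k + 1))) := by
    have affine_continuous : Continuous
        fun s => y (t k) + ((s - t k) / 2) • (v (t k) + v (t (k + 1))) := by
      fun_prop
    refine affine_continuous.continuousOn.congr fun s hs => ?_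
    rcases hs.1.eq_or_lt with rfl | hlt
    · simp
    · exact hy k hk s ⟨hlt, hs.2⟩
  have continuousOn_upTo : ∀ k ≤ N, ContinuousOn y (Icc (t 0) (t k)) := by
    intro k hk
    induction k with
    | zero => simp
    | succ k ih =>
      rw [← Icc_union_Icc_eq_Icc (ht.le_of_le k.zero_le (by lia)) (ht.lt_succ k hk).le]
      exact (ih (by lia)).union_of_isClosed (continuousOn_cell hk) isClosed_Icc isClosed_Icc
  simpa only [ht.left_eq, ht.right_eq] using continuousOn_upTo N le_rfl

end Paths

section UniformConvergence

variable {ι X Y : Type*} {l : Filter ι}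

theorem tendstoUniformlyOn_prodMk {α : Type*} [UniformSpace X] [UniformSpace Y] {p : ι → α → X}
    {p₀ : α → X} {q : ι → α → Y} {q₀ : α → Y} {s : Set α} (hp : TendstoUniformlyOn p p₀ l s)
    (hq : TendstoUniformlyOn q q₀ l s) :
    TendstoUniformlyOn (fun i u => (p i u, q i u)) (fun u => (p₀ u, q₀ u)) l s :=
  fun V hV => tendsto_diag.eventually (hp.prodMk hq V hV)

theorem tendstoUniformlyOn_comp_of_isCompact {α : Type*} [UniformSpace X] [UniformSpace Y]
    {F : X → Y} (hF : Continuous F) {p : ι → α → X} {q : α → X} {s : Set α} {K : Set X}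
    (hK : IsCompact K) (hq : MapsTo q s K) (h : TendstoUniformlyOn p q l s) :
    TendstoUniformlyOn (fun i u => F (p i u)) (fun u => F (q u)) l s := by
  intro V hV
  filter_upwards [h _ (hK.uniformContinuousAt_of_continuousAt F (fun _ _ => hF.continuousAt) hV)]
    with i hi u hu
  exact hi u hu (hq hu)

theorem tendstoUniformlyOn_comp_sampling [PseudoMetricSpace X] [PseudoMetricSpace Y]
    {w : ι → X → Y} {w₀ : X → Y} {K s : Set X} (hK : IsCompact K) (hsK : s ⊆ K)
    (hw : TendstoUniformlyOn w w₀ l K) (hw₀ : ContinuousOn w₀ K) {τ : ι → X → X}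
    (hτK : ∀ i, MapsTo (τ i) s K) (hτ : TendstoUniformlyOn τ id l s) :
    TendstoUniformlyOn (fun i u => w i (τ i u)) w₀ l s := by
  have hw₀_unif : TendstoUniformlyOn (fun i u => w₀ (τ i u)) w₀ l s :=
    (hK.uniformContinuousOn_of_continuous hw₀).comp_tendstoUniformlyOn_eventually
      (.of_forall hτK) hsK hτ
  rw [Metric.tendstoUniformlyOn_iff] at hw hw₀_unif ⊢
  intro ε hε
  filter_upwards [hw (ε / 2) (half_pos hε), hw₀_unif (ε / 2) (half_pos hε)] with i hi hi₀ u hu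
  calc dist (w₀ u) (w i (τ i u))
      ≤ dist (w₀ u) (w₀ (τ i u)) + dist (w₀ (τ i u)) (w i (τ i u)) := dist_triangle _ _ _
    _ < ε / 2 + ε / 2 := add_lt_add (hi₀ u hu) (hi _ (hτK i hu))
    _ = ε := add_halves ε

end UniformConvergence

section Sampling

variable {ι : Type*} {l : Filter ι} {t : ι → ℕ → ℝ} {N : ι → ℕ} {a b : ℝ}

theorem mapsTo_node_cellIndex (ht : ∀ i, IsPartition (t i) (N i) a b) {j : ℕ} (hj : j ≤ 1)
    (i : ι) : MapsTo (fun s => t i (cellIndex (t i) s + j)) (Ioc a b) (Icc a b) := fun _ hs =>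
  (ht i).mem_Icc (by have := (ht i).cellIndex_lt hs; lia)

theorem tendstoUniformlyOn_node_cellIndex (ht : ∀ i, IsPartition (t i) (N i) a b)
    (hmesh : Tendsto (fun i => mesh (t i) (N i)) l (𝓝 0)) {j : ℕ} (hj : j ≤ 1) :
    TendstoUniformlyOn (fun i s => t i (cellIndex (t i) s + j)) id l (Ioc a b) := by
  rw [Metric.tendstoUniformlyOn_iff]
  intro ε hε
  filter_upwards [hmesh.eventually_lt_const hε] with i hi s hs
  have hs_cell := (ht i).mem_cell_cellIndex hs
  have hstep := sub_le_mesh (t i) ((ht i).cellIndex_lt hs)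
  rw [id_eq, Real.dist_eq, abs_lt]
  interval_cases j
  · rw [add_zero]
    constructor <;> linarith [hs_cell.1, hs_cell.2]
  · constructor <;> linarith [hs_cell.1, hs_cell.2]

theorem tendstoUniformlyOn_comp_node {Y : Type*} [PseudoMetricSpace Y]
    (ht : ∀ i, IsPartition (t i) (N i) a b)
    (hmesh : Tendsto (fun i => mesh (t i) (N i)) l (𝓝 0)) {w : ι → ℝ → Y} {w₀ : ℝ → Y}
    (hw : TendstoUniformlyOn w w₀ l (Icc a b)) (hw₀ : ContinuousOn w₀ (Icc a b)) {j : ℕ}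
    (hj : j ≤ 1) :
    TendstoUniformlyOn (fun i s => w i (t i (cellIndex (t i) s + j))) w₀ l (Ioc a b) :=
  tendstoUniformlyOn_comp_sampling isCompact_Icc Ioc_subset_Icc_self hw hw₀
    (mapsTo_node_cellIndex ht hj) (tendstoUniformlyOn_node_cellIndex ht hmesh hj)

end Sampling

section Integration

variable {ι α E : Type*} {l : Filter ι} [MeasurableSpace α] {μ : Measure α}
  [NormedAddCommGroup E]

theorem tendsto_eLpNorm_sub_of_tendstoUniformlyOn {s : Set α} (hs : MeasurableSet s)
    (hμs : μ s ≠ ∞) (p : ℝ≥0∞) {g : ι → α → E} {g₀ : α → E} (hg : TendstoUniformlyOn g g₀ l s) :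
    Tendsto (fun i => eLpNorm (g i - g₀) p (μ.restrict s)) l (𝓝 0) := by
  have bound_tendsto : Tendsto
      (fun ε => μ.restrict s univ ^ p.toReal⁻¹ * ENNReal.ofReal ε) (𝓝[>] 0) (𝓝 0) := by
    have mass_ne_top : μ.restrict s univ ^ p.toReal⁻¹ ≠ ∞ :=
      ENNReal.rpow_ne_top_of_nonneg (by positivity) (by rwa [Measure.restrict_apply_univ])
    have hlim := ENNReal.Tendsto.const_mul (ENNReal.continuous_ofReal.tendsto 0)
      (.inr mass_ne_top)
    rw [ENNReal.ofReal_zero, mul_zero] at hlim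
    exact hlim.mono_left nhdsWithin_le_nhds
  rw [ENNReal.tendsto_nhds_zero]
  intro C hC
  obtain ⟨ε, hεC, hε⟩ :=
    ((bound_tendsto.eventually_le_const hC).and self_mem_nhdsWithin).exists
  filter_upwards [Metric.tendstoUniformlyOn_iff.1 hg ε hε] with i hi
  refine (eLpNorm_le_of_ae_bound ?_).trans hεC
  filter_upwards [ae_restrict_mem hs] with u hu
  rw [Pi.sub_apply, ← dist_eq_norm, dist_comm]
  exact (hi u hu).le

theorem eLpNorm_two_eq_ofReal_sqrt_integral {g : α → E} (hg : MemLp g 2 μ) :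
    eLpNorm g 2 μ = ENNReal.ofReal √(∫ u, ‖g u‖ ^ 2 ∂μ) := by
  rw [hg.eLpNorm_eq_integral_rpow_norm two_ne_zero ENNReal.ofNat_ne_top, Real.sqrt_eq_rpow]
  simp

theorem tendsto_integral_sq_norm {g : ι → α → E} {g₀ : α → E} (hg : ∀ i, MemLp (g i) 2 μ)
    (hg₀ : MemLp g₀ 2 μ) (h : Tendsto (fun i => eLpNorm (g i - g₀) 2 μ) l (𝓝 0)) :
    Tendsto (fun i => ∫ u, ‖g i u‖ ^ 2 ∂μ) l (𝓝 (∫ u, ‖g₀ u‖ ^ 2 ∂μ)) := by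
  have integral_eq {g : α → E} (hg : MemLp g 2 μ) : ∫ u, ‖g u‖ ^ 2 ∂μ = ‖hg.toLp g‖ ^ 2 := by
    rw [Lp.norm_toLp, eLpNorm_two_eq_ofReal_sqrt_integral hg,
      ENNReal.toReal_ofReal (Real.sqrt_nonneg _),
      Real.sq_sqrt (integral_nonneg fun u => sq_nonneg ‖g u‖)]
  simp only [integral_eq (hg _), integral_eq hg₀]
  exact ((Lp.tendsto_Lp_iff_tendsto_eLpNorm'' g hg g₀ hg₀).2 h).norm.pow 2

theorem integrableOn_Ioc_of_continuousOn {a b : ℝ} {w : ℝ → E} (hw : ContinuousOn w (Icc a b)) :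
    IntegrableOn w (Ioc a b) :=
  (hw.integrableOn_compact isCompact_Icc).mono_set Ioc_subset_Icc_self

theorem memLp_Ioc_of_continuousOn {a b : ℝ} {w : ℝ → E} (hw : ContinuousOn w (Icc a b))
    (p : ℝ≥0∞) : MemLp w p (volume.restrict (Ioc a b)) := by
  obtain ⟨C, hC⟩ := isCompact_Icc.exists_bound_of_continuousOn hw
  exact .of_bound (integrableOn_Ioc_of_continuousOn hw).aestronglyMeasurable C
    ((ae_restrict_mem measurableSet_Ioc).mono fun s hs => hC s (Ioc_subset_Icc_self hs))

end Integration

/-- The norm `(|x₀|² + ∫ |v|²)^{1/2}` in `W²` of the path on `[a, b]` with initial value `x₀` and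
derivative `v`. -/
noncomputable def w2Norm {E : Type*} [NormedAddCommGroup E] (a b : ℝ) (x₀ : E) (v : ℝ → E) : ℝ :=
  √(‖x₀‖ ^ 2 + ∫ s in Ioc a b, ‖v s‖ ^ 2)

section W2

variable {ι E : Type*} {l : Filter ι} [NormedAddCommGroup E] {a b : ℝ}

theorem w2Norm_nonneg (x₀ : E) (v : ℝ → E) : 0 ≤ w2Norm a b x₀ v := Real.sqrt_nonneg _

theorem norm_le_w2Norm (x₀ : E) (v : ℝ → E) : ‖x₀‖ ≤ w2Norm a b x₀ v :=
  Real.le_sqrt_of_sq_le (le_add_of_nonneg_right (integral_nonneg fun s => sq_nonneg ‖v s‖))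

theorem tendsto_of_tendsto_w2Norm_add_add {Z Θ : Type*} [NormedAddCommGroup Z]
    [NormedAddCommGroup Θ] {y₀ : ι → E} {v : ι → ℝ → E} {ζ : ι → Z} {z₀ : Z} {ϑ : ι → Θ} {θ : Θ}
    (h : Tendsto (fun i => w2Norm a b (y₀ i) (v i) + ‖ζ i - z₀‖ + ‖ϑ i - θ‖) l (𝓝 0)) :
    Tendsto (fun i => w2Norm a b (y₀ i) (v i)) l (𝓝 0) ∧ Tendsto ζ l (𝓝 z₀) ∧
      Tendsto ϑ l (𝓝 θ) := by
  have nonneg₁ (i : ι) := w2Norm_nonneg (a := a) (b := b) (y₀ i) (v i)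
  have nonneg₂ (i : ι) := norm_nonneg (ζ i - z₀)
  have nonneg₃ (i : ι) := norm_nonneg (ϑ i - θ)
  rw [tendsto_iff_norm_sub_tendsto_zero (b := z₀), tendsto_iff_norm_sub_tendsto_zero (b := θ)]
  exact ⟨squeeze_zero nonneg₁ (fun i => by linarith [nonneg₂ i, nonneg₃ i]) h,
    squeeze_zero nonneg₂ (fun i => by linarith [nonneg₁ i, nonneg₃ i]) h,
    squeeze_zero nonneg₃ (fun i => by linarith [nonneg₁ i, nonneg₂ i]) h⟩

theorem eLpNorm_two_le_w2Norm (x₀ : E) {v : ℝ → E} (hv : MemLp v 2 (volume.restrict (Ioc a b))) :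
    eLpNorm v 2 (volume.restrict (Ioc a b)) ≤ ENNReal.ofReal (w2Norm a b x₀ v) := by
  rw [eLpNorm_two_eq_ofReal_sqrt_integral hv]
  exact ENNReal.ofReal_le_ofReal (Real.sqrt_le_sqrt (le_add_of_nonneg_left (sq_nonneg ‖x₀‖)))

theorem tendsto_eLpNorm_two_of_w2Norm {y₀ : ι → E} {v : ι → ℝ → E}
    (hv : ∀ i, MemLp (v i) 2 (volume.restrict (Ioc a b)))
    (h : Tendsto (fun i => w2Norm a b (y₀ i) (v i)) l (𝓝 0)) :
    Tendsto (fun i => eLpNorm (v i) 2 (volume.restrict (Ioc a b))) l (𝓝 0) := by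
  have h_ofReal := ENNReal.tendsto_ofReal h
  rw [ENNReal.ofReal_zero] at h_ofReal
  exact tendsto_of_tendsto_of_tendsto_of_le_of_le tendsto_const_nhds h_ofReal
    (fun _ => zero_le) fun i => eLpNorm_two_le_w2Norm (y₀ i) (hv i)

theorem tendsto_integral_norm_of_eLpNorm_two {α : Type*} [MeasurableSpace α] {μ : Measure α}
    [IsFiniteMeasure μ] {v : ι → α → E} (hv : ∀ i, AEStronglyMeasurable (v i) μ)
    (h : Tendsto (fun i => eLpNorm (v i) 2 μ) l (𝓝 0)) :
    Tendsto (fun i => ∫ u, ‖v i u‖ ∂μ) l (𝓝 0) := by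
  have tendsto_eLpNorm_one : Tendsto (fun i => eLpNorm (v i) 1 μ) l (𝓝 0) := by
    have h_mul := ENNReal.Tendsto.mul_const (b := μ univ ^ (1 / 2 : ℝ)) h
      (.inr (ENNReal.rpow_ne_top_of_nonneg (by positivity) (measure_ne_top μ univ)))
    rw [zero_mul] at h_mul
    refine tendsto_of_tendsto_of_tendsto_of_le_of_le tendsto_const_nhds h_mul
      (fun _ => zero_le) fun i => ?_
    have holder := eLpNorm_le_eLpNorm_mul_rpow_measure_univ one_le_two (hv i)
    norm_num at holder
    simpa using holder
  simp only [integral_norm_eq_lintegral_enorm (hv _), ← eLpNorm_one_eq_lintegral_enorm]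
  exact (ENNReal.tendsto_toReal ENNReal.zero_ne_top).comp tendsto_eLpNorm_one

variable [NormedSpace ℝ E]

theorem IsPrimitiveOn.sub {x₀ y₀ : E} {v w x y : ℝ → E} (hx : IsPrimitiveOn a b x₀ v x)
    (hy : IsPrimitiveOn a b y₀ w y) (hv : IntegrableOn v (Ioc a b))
    (hw : IntegrableOn w (Ioc a b)) : IsPrimitiveOn a b (x₀ - y₀) (v - w) (x - y) := by
  intro s hs
  have hss : Ioc a s ⊆ Ioc a b := Ioc_subset_Ioc_right hs.2
  rw [Pi.sub_apply, hx s hs, hy s hs, add_sub_add_comm]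
  exact congrArg _ (integral_sub (hv.mono_set hss) (hw.mono_set hss)).symm

theorem IsPrimitiveOn.norm_le {x₀ : E} {v x : ℝ → E} (hx : IsPrimitiveOn a b x₀ v x)
    (hv : IntegrableOn v (Ioc a b)) {s : ℝ} (hs : s ∈ Icc a b) :
    ‖x s‖ ≤ ‖x₀‖ + ∫ u in Ioc a b, ‖v u‖ := by
  rw [hx s hs]
  calc ‖x₀ + ∫ u in Ioc a s, v u‖ ≤ ‖x₀‖ + ∫ u in Ioc a s, ‖v u‖ :=
        (norm_add_le _ _).trans (by gcongr; exact norm_integral_le_integral_norm v)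
    _ ≤ ‖x₀‖ + ∫ u in Ioc a b, ‖v u‖ :=
        add_le_add le_rfl (setIntegral_mono_set hv.norm
          (.of_forall fun u => norm_nonneg (v u)) (Ioc_subset_Ioc_right hs.2).eventuallyLE)

theorem tendstoUniformlyOn_of_w2Norm {y₀ : ι → E} {v y : ι → ℝ → E} {x₀ : E} {w x : ℝ → E}
    (hy : ∀ i, IsPrimitiveOn a b (y₀ i) (v i) (y i)) (hx : IsPrimitiveOn a b x₀ w x)
    (hv : ∀ i, MemLp (v i) 2 (volume.restrict (Ioc a b)))
    (hw : MemLp w 2 (volume.restrict (Ioc a b)))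
    (h : Tendsto (fun i => w2Norm a b (y₀ i - x₀) (v i - w)) l (𝓝 0)) :
    TendstoUniformlyOn y x l (Icc a b) := by
  have hvw (i : ι) : MemLp (v i - w) 2 (volume.restrict (Ioc a b)) := (hv i).sub hw
  have tendsto_left : Tendsto (fun i => ‖y₀ i - x₀‖) l (𝓝 0) :=
    squeeze_zero (fun _ => norm_nonneg _) (fun i => norm_le_w2Norm _ _) h
  have tendsto_bound := tendsto_left.add (tendsto_integral_norm_of_eLpNorm_two
    (fun i => (hvw i).aestronglyMeasurable) (tendsto_eLpNorm_two_of_w2Norm hvw h))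
  rw [add_zero] at tendsto_bound
  rw [Metric.tendstoUniformlyOn_iff]
  intro ε hε
  filter_upwards [tendsto_bound.eventually_lt_const hε] with i hi s hs
  rw [dist_comm, dist_eq_norm]
  exact (((hy i).sub hx ((hv i).integrable one_le_two) (hw.integrable one_le_two)).norm_le
    ((hvw i).integrable one_le_two) hs).trans_lt hi

end W2

section TrapezoidalRule

theorem le_of_le_add_mul_half_add {e e' δ L η : ℝ} (he : 0 ≤ e) (hδ : 0 ≤ δ) (hL : 0 ≤ L)
    (hη : 0 ≤ η) (hδL : δ * L ≤ 1) (h : e' ≤ e + δ * (L / 2 * (e + e') + η)) :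
    e' ≤ (1 + 2 * L * δ) * e + 2 * η * δ := by
  have hx : 0 ≤ δ * L := mul_nonneg hδ hL
  have one_sub_pos : 0 < 1 - δ * L / 2 := by linarith
  refine le_of_mul_le_mul_left ?_ one_sub_pos
  calc (1 - δ * L / 2) * e' ≤ (1 + δ * L / 2) * e + δ * η := by linarith
    _ ≤ (1 - δ * L / 2) * ((1 + 2 * L * δ) * e + 2 * η * δ) := by
        nlinarith [mul_nonneg (mul_nonneg hx (sub_nonneg.2 hδL)) he,
          mul_nonneg (mul_nonneg hδ hη) (sub_nonneg.2 hδL)]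

theorem IsPartition.le_mul_exp_of_succ_le {t : ℕ → ℝ} {N : ℕ} {a b : ℝ} (ht : IsPartition t N a b)
    {u : ℕ → ℝ} {c β : ℝ} (hu₀ : 0 ≤ u 0) (hc : 0 ≤ c) (hβ : 0 ≤ β)
    (hu : ∀ k < N, u (k + 1) ≤ (1 + c * (t (k + 1) - t k)) * u k + β * (t (k + 1) - t k))
    {k : ℕ} (hk : k ≤ N) : u k ≤ (u 0 + β * (b - a)) * Real.exp (c * (b - a)) := by
  -- Freezing `u` and `t` after index `N` makes the recursion hold for all indices.
  set τ : ℕ → ℝ := fun k => t (min k N) with hτ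
  have step_nonneg (j : ℕ) : 0 ≤ τ (j + 1) - τ j :=
    sub_nonneg.2 (ht.le_of_le (min_le_min_right N j.le_succ) (min_le_right _ _))
  have hτu (j : ℕ) : u (min (j + 1) N) ≤
      (1 + c * (τ (j + 1) - τ j)) * u (min j N) + β * (τ (j + 1) - τ j) := by
    rcases lt_or_ge j N with hj | hj
    · simpa only [hτ, min_eq_left hj.le, min_eq_left (Nat.succ_le_of_lt hj)] using hu j hj
    · simp [hτ, min_eq_right hj, min_eq_right (hj.trans j.le_succ)]
  have hbound := discrete_gronwall (u := fun j => u (min j N)) (n₀ := 0) (by simpa using hu₀)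
    (fun j _ => hτu j) (fun j _ => mul_nonneg hc (step_nonneg j))
    (fun j _ => mul_nonneg hβ (step_nonneg j)) (Nat.zero_le k)
  have sum_steps_le : ∑ j ∈ Finset.range k, (τ (j + 1) - τ j) ≤ b - a := by
    rw [Finset.sum_range_sub]
    simpa only [hτ, min_eq_left hk, Nat.zero_min, ht.left_eq, sub_le_sub_iff_right]
      using (ht.mem_Icc hk).2
  simp only [← Finset.mul_sum, Nat.Ico_zero_eq_range, min_eq_left hk, Nat.zero_min] at hbound
  have hab := sub_nonneg.2 ht.left_le_right
  exact hbound.trans (by gcongr)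

variable {E : Type*} [NormedAddCommGroup E] [NormedSpace ℝ E] [CompleteSpace E]
  {t : ℕ → ℝ} {N : ℕ} {a b : ℝ}

theorem IsTrapezoidPath.norm_sub_le_of_mem_cell {v y g z : ℝ → E} {z₀ : E}
    (hy : IsTrapezoidPath t N v y) (ht : IsPartition t N a b) (hz : IsPrimitiveOn a b z₀ g z)
    (hg : IntegrableOn g (Ioc a b)) {k : ℕ} (hk : k < N) {A B : ℝ}
    (hA : ∀ s ∈ Ioc (t k) (t (k + 1)), ‖v (t k) - g s‖ ≤ A)
    (hB : ∀ s ∈ Ioc (t k) (t (k + 1)), ‖v (t (k + 1)) - g s‖ ≤ B)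
    {s : ℝ} (hs : s ∈ Ioc (t k) (t (k + 1))) :
    ‖y s - z s‖ ≤ ‖y (t k) - z (t k)‖ + (s - t k) * ((A + B) / 2) := by
  set m : E := (2⁻¹ : ℝ) • (v (t k) + v (t (k + 1))) with hm
  have hk_mem := ht.mem_Icc hk.le
  have hs_mem : s ∈ Icc a b := ⟨hk_mem.1.trans hs.1.le, hs.2.trans (ht.mem_Icc hk).2⟩
  have hg_cell : IntervalIntegrable g volume (t k) s :=
    (intervalIntegrable_iff_integrableOn_Ioc_of_le hs.1.le).2
      (hg.mono_set (Ioc_subset_Ioc hk_mem.1 hs_mem.2))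
  have sub_eq : y s - z s = (y (t k) - z (t k)) + ∫ u in t k..s, (m - g u) := by
    rw [intervalIntegral.integral_sub intervalIntegrable_const hg_cell,
      ← hz.sub_eq_integral hg hk_mem hs_mem, intervalIntegral.integral_const, hy k hk s hs, hm,
      smul_smul, div_eq_mul_inv]
    abel
  have norm_le (u : ℝ) (hu : u ∈ uIoc (t k) s) : ‖m - g u‖ ≤ (A + B) / 2 := by
    rw [uIoc_of_le hs.1.le] at hu
    have hu_cell : u ∈ Ioc (t k) (t (k + 1)) := ⟨hu.1, hu.2.trans hs.2⟩
    have m_sub_eq : m - g u = (2⁻¹ : ℝ) • ((v (t k) - g u) + (v (t (k + 1)) - g u)) := by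
      rw [hm]; module
    rw [m_sub_eq, norm_smul, Real.norm_of_nonneg (by positivity), ← div_eq_inv_mul]
    gcongr
    exact (norm_add_le _ _).trans (add_le_add (hA u hu_cell) (hB u hu_cell))
  rw [sub_eq]
  have integral_le := intervalIntegral.norm_integral_le_of_norm_le_const norm_le
  rw [abs_of_pos (sub_pos.2 hs.1), mul_comm] at integral_le
  exact (norm_add_le _ _).trans (add_le_add le_rfl integral_le)

theorem IsTrapezoidPath.norm_sub_le_of_mem_cell_of_lipschitz {v V y g z : ℝ → E} {z₀ : E}
    (hy : IsTrapezoidPath t N v y) (ht : IsPartition t N a b) (hz : IsPrimitiveOn a b z₀ g z)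
    (hg : IntegrableOn g (Ioc a b)) {L η : ℝ}
    (hv : ∀ s ∈ Icc a b, ‖v s - V s‖ ≤ L * ‖y s - z s‖) {k : ℕ} (hk : k < N)
    (hV : ∀ s ∈ Ioc (t k) (t (k + 1)), ‖V (t k) - g s‖ ≤ η ∧ ‖V (t (k + 1)) - g s‖ ≤ η)
    {s : ℝ} (hs : s ∈ Ioc (t k) (t (k + 1))) :
    ‖y s - z s‖ ≤ ‖y (t k) - z (t k)‖ + (s - t k) *
      (L / 2 * (‖y (t k) - z (t k)‖ + ‖y (t (k + 1)) - z (t (k + 1))‖) + η) := by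
  have node_le {j : ℕ} (hj : j ≤ N) {u : ℝ} (hu : ‖V (t j) - g u‖ ≤ η) :
      ‖v (t j) - g u‖ ≤ L * ‖y (t j) - z (t j)‖ + η :=
    (norm_sub_le_norm_sub_add_norm_sub _ (V (t j)) _).trans
      (add_le_add (hv _ (ht.mem_Icc hj)) hu)
  refine (hy.norm_sub_le_of_mem_cell ht hz hg hk (fun u hu => node_le hk.le (hV u hu).1)
    (fun u hu => node_le hk (hV u hu).2) hs).trans_eq ?_
  ring

theorem IsTrapezoidPath.norm_sub_le {v V y g z : ℝ → E} {z₀ : E} (hy : IsTrapezoidPath t N v y)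
    (ht : IsPartition t N a b) (hz : IsPrimitiveOn a b z₀ g z) (hg : IntegrableOn g (Ioc a b))
    {L η : ℝ} (hL : 0 ≤ L) (hδL : ∀ k < N, (t (k + 1) - t k) * L ≤ 1)
    (hv : ∀ s ∈ Icc a b, ‖v s - V s‖ ≤ L * ‖y s - z s‖)
    (hV : ∀ k < N, ∀ s ∈ Ioc (t k) (t (k + 1)), ‖V (t k) - g s‖ ≤ η ∧ ‖V (t (k + 1)) - g s‖ ≤ η)
    (h₀ : ‖y a - z a‖ ≤ η) {s : ℝ} (hs : s ∈ Icc a b) :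
    ‖y s - z s‖ ≤
      ((1 + L * (b - a)) * ((1 + 2 * (b - a)) * Real.exp (2 * L * (b - a))) + (b - a)) * η := by
  have hη : 0 ≤ η := (norm_nonneg _).trans h₀
  have hab : 0 ≤ b - a := sub_nonneg.2 ht.left_le_right
  set K : ℝ := (1 + 2 * (b - a)) * Real.exp (2 * L * (b - a)) with hK
  have hK_nonneg : 0 ≤ K := by positivity
  set e : ℕ → ℝ := fun k => ‖y (t k) - z (t k)‖ with he
  have cell_le {k : ℕ} (hk : k < N) {s : ℝ} (hs : s ∈ Ioc (t k) (t (k + 1))) :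
      ‖y s - z s‖ ≤ e k + (s - t k) * (L / 2 * (e k + e (k + 1)) + η) :=
    hy.norm_sub_le_of_mem_cell_of_lipschitz ht hz hg hv hk (hV k hk) hs
  have e_le {k : ℕ} (hk : k ≤ N) : e k ≤ K * η := by
    refine (ht.le_mul_exp_of_succ_le (u := e) (c := 2 * L) (β := 2 * η) (norm_nonneg _)
      (by positivity) (by positivity) (fun k hk => ?_) hk).trans ?_
    · have hlt := ht.lt_succ k hk
      exact le_of_le_add_mul_half_add (norm_nonneg _) (sub_pos.2 hlt).le hL hη (hδL k hk)
        (cell_le hk (right_mem_Ioc.2 hlt))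
    · have e_zero_le : e 0 ≤ η := by simpa only [he, ht.left_eq] using h₀
      rw [hK]
      linear_combination Real.exp (2 * L * (b - a)) * e_zero_le
  rcases hs.1.eq_or_lt with rfl | has
  · have node_zero_le : ‖y a - z a‖ ≤ K * η := ht.left_eq ▸ e_le N.zero_le
    nlinarith [mul_nonneg (mul_nonneg hL hab) (mul_nonneg hK_nonneg hη), mul_nonneg hab hη]
  · obtain ⟨k, hk, hsk⟩ := ht.exists_mem_cell ⟨has, hs.2⟩
    have hlen : s - t k ≤ b - a := sub_le_sub hs.2 (ht.mem_Icc hk.le).1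
    calc ‖y s - z s‖ ≤ e k + (s - t k) * (L / 2 * (e k + e (k + 1)) + η) := cell_le hk hsk
      _ ≤ K * η + (b - a) * (L / 2 * (K * η + K * η) + η) := by
          gcongr
          exacts [e_le hk.le, e_le hk.le, e_le hk]
      _ = _ := by ring

theorem tendstoUniformlyOn_trapezoidPath {ι : Type*} {l : Filter ι} {t : ι → ℕ → ℝ} {N : ι → ℕ}
    (ht : ∀ i, IsPartition (t i) (N i) a b)
    (hmesh : Tendsto (fun i => mesh (t i) (N i)) l (𝓝 0))
    {v V y : ι → ℝ → E} {g z : ℝ → E} {z₀ : E}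
    (hy : ∀ i, IsTrapezoidPath (t i) (N i) (v i) (y i)) (hz : IsPrimitiveOn a b z₀ g z)
    (hg : ContinuousOn g (Icc a b)) {L : ℝ} (hL : 0 ≤ L)
    (hv : ∀ i, ∀ s ∈ Icc a b, ‖v i s - V i s‖ ≤ L * ‖y i s - z s‖)
    (hV : TendstoUniformlyOn V g l (Icc a b)) (h₀ : Tendsto (fun i => y i a) l (𝓝 (z a))) :
    TendstoUniformlyOn y z l (Icc a b) := by
  set C : ℝ :=
    (1 + L * (b - a)) * ((1 + 2 * (b - a)) * Real.exp (2 * L * (b - a))) + (b - a)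
  have mesh_mul := hmesh.mul_const L
  rw [zero_mul] at mesh_mul
  rw [Metric.tendstoUniformlyOn_iff]
  intro ε hε
  obtain ⟨η, hη, hCη⟩ : ∃ η > 0, C * η < ε := exists_pos_mul_lt hε C
  filter_upwards [mesh_mul.eventually_le_const one_pos, Metric.tendsto_nhds.1 h₀ η hη,
    Metric.tendstoUniformlyOn_iff.1
      (tendstoUniformlyOn_comp_node ht hmesh hV hg zero_le_one) η hη,
    Metric.tendstoUniformlyOn_iff.1
      (tendstoUniformlyOn_comp_node ht hmesh hV hg le_rfl) η hη]
    with i hi_mesh hi₀ hi_left hi_right s hs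
  rw [dist_comm, dist_eq_norm]
  refine ((hy i).norm_sub_le (ht i) hz (integrableOn_Ioc_of_continuousOn hg) hL
    (fun k hk => ?_) (hv i) (fun k hk u hu => ?_)
    ((dist_eq_norm (y i a) (z a)).symm.trans_le hi₀.le) hs).trans_lt hCη
  · exact (mul_le_mul_of_nonneg_right (sub_le_mesh (t i) hk) hL).trans hi_mesh
  · have hu_mem := (ht i).mem_Ioc_of_mem_cell hk hu
    have left_lt := hi_left u hu_mem
    have right_lt := hi_right u hu_mem
    rw [(ht i).cellIndex_eq hk hu, dist_comm, dist_eq_norm] at left_lt right_lt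
    exact ⟨left_lt.le, right_lt.le⟩

end TrapezoidalRule

section Energy

variable {E F : Type*} [NormedAddCommGroup E] [NormedSpace ℝ E] [NormedAddCommGroup F]
  [NormedSpace ℝ F] {a b : ℝ}

theorem tendsto_integral_sq_norm_clm {ι α : Type*} {l : Filter ι} [MeasurableSpace α]
    {μ : Measure α} (T : E →L[ℝ] F) {g : ι → α → E} {g₀ : α → E} (hg : ∀ i, MemLp (g i) 2 μ)
    (hg₀ : MemLp g₀ 2 μ) (h : Tendsto (fun i => eLpNorm (g i - g₀) 2 μ) l (𝓝 0)) :
    Tendsto (fun i => ∫ u, ‖T (g i u)‖ ^ 2 ∂μ) l (𝓝 (∫ u, ‖T (g₀ u)‖ ^ 2 ∂μ)) := by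
  refine tendsto_integral_sq_norm (fun i => T.comp_memLp' (hg i)) (T.comp_memLp' hg₀) ?_
  have h_mul := ENNReal.Tendsto.const_mul (a := ENNReal.ofReal ‖T‖) h (.inr ENNReal.ofReal_ne_top)
  rw [mul_zero] at h_mul
  refine tendsto_of_tendsto_of_tendsto_of_le_of_le tendsto_const_nhds h_mul
    (fun _ => zero_le) fun i => eLpNorm_le_mul_eLpNorm_of_ae_le_mul (.of_forall fun u => ?_) 2
  simpa only [Pi.sub_apply, Function.comp_apply, map_sub] using T.le_opNorm (g i u - g₀ u)

theorem IsPrimitiveOn.sum_energy_eq_integral [CompleteSpace E] {t : ℕ → ℝ} {N : ℕ} {x₀ : E}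
    {v x : ℝ → E} (hx : IsPrimitiveOn a b x₀ v x) (ht : IsPartition t N a b)
    (hv : IsConstOnCells t N v) (T : E →L[ℝ] F) (w : ℝ → E) :
    ∑ k ∈ Finset.range N, (t (k + 1) - t k) *
        ‖T ((t (k + 1) - t k)⁻¹ • (x (t (k + 1)) - x (t k)) - (1 / 2 : ℝ) • w (t k)
          - (1 / 2 : ℝ) • w (t (k + 1)))‖ ^ 2 =
      ∫ s in Ioc a b, ‖T (v s - (1 / 2 : ℝ) • w (t (cellIndex t s))
        - (1 / 2 : ℝ) • w (t (cellIndex t s + 1)))‖ ^ 2 := by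
  calc _ = ∑ k ∈ Finset.range N, (t (k + 1) - t k) •
        ‖T (v (t k) - (1 / 2 : ℝ) • w (t k) - (1 / 2 : ℝ) • w (t (k + 1)))‖ ^ 2 :=
        Finset.sum_congr rfl fun k hk => by
          rw [hx.slope_eq_of_isConstOnCells ht hv (Finset.mem_range.1 hk), smul_eq_mul]
    _ = ∫ s in Ioc a b, ‖T (v (t (cellIndex t s)) - (1 / 2 : ℝ) • w (t (cellIndex t s))
        - (1 / 2 : ℝ) • w (t (cellIndex t s + 1)))‖ ^ 2 :=
        ht.sum_smul_eq_integral_cellIndex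
          fun k => ‖T (v (t k) - (1 / 2 : ℝ) • w (t k) - (1 / 2 : ℝ) • w (t (k + 1)))‖ ^ 2
    _ = _ := integral_congr_ae <| by
        filter_upwards [hv.ae_eq_cellIndex ht] with s hs
        rw [hs]

variable {ι : Type*} {l : Filter ι} {t : ι → ℕ → ℝ} {N : ι → ℕ}

theorem tendsto_eLpNorm_two_residual (ht : ∀ i, IsPartition (t i) (N i) a b)
    (hmesh : Tendsto (fun i => mesh (t i) (N i)) l (𝓝 0)) {v : ι → ℝ → E} {v₀ : ℝ → E}
    (hv : ∀ i, MemLp (v i) 2 (volume.restrict (Ioc a b)))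
    (hv₀ : MemLp v₀ 2 (volume.restrict (Ioc a b)))
    (hvv₀ : Tendsto (fun i => eLpNorm (v i - v₀) 2 (volume.restrict (Ioc a b))) l (𝓝 0))
    {w : ι → ℝ → E} {w₀ : ℝ → E} (hw : TendstoUniformlyOn w w₀ l (Icc a b))
    (hw₀ : ContinuousOn w₀ (Icc a b)) :
    Tendsto (fun i => eLpNorm ((fun s => v i s - (1 / 2 : ℝ) • w i (t i (cellIndex (t i) s))
        - (1 / 2 : ℝ) • w i (t i (cellIndex (t i) s + 1))) - fun s => v₀ s - w₀ s) 2
      (volume.restrict (Ioc a b))) l (𝓝 0) := by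
  set mean : ι → ℝ → E := fun i s => (1 / 2 : ℝ) • w i (t i (cellIndex (t i) s))
    + (1 / 2 : ℝ) • w i (t i (cellIndex (t i) s + 1)) with hmean
  have mean_unif : TendstoUniformlyOn mean w₀ l (Ioc a b) := by
    have average_unifCont : UniformContinuous fun p : E × E =>
        (1 / 2 : ℝ) • p.1 + (1 / 2 : ℝ) • p.2 :=
      (uniformContinuous_fst.const_smul _).add (uniformContinuous_snd.const_smul _)
    refine (average_unifCont.comp_tendstoUniformlyOn
      (tendstoUniformlyOn_prodMk (tendstoUniformlyOn_comp_node ht hmesh hw hw₀ zero_le_one)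
        (tendstoUniformlyOn_comp_node ht hmesh hw hw₀ le_rfl))).congr_right fun s _ => ?_
    simp only [Function.comp_apply]
    module
  have mean_meas (i : ι) : AEStronglyMeasurable (mean i) (volume.restrict (Ioc a b)) :=
    ((ht i).integrableOn_cellIndex fun k =>
      (1 / 2 : ℝ) • w i (t i k) + (1 / 2 : ℝ) • w i (t i (k + 1))).aestronglyMeasurable
  have hw₀_meas := (integrableOn_Ioc_of_continuousOn hw₀).aestronglyMeasurable
  have tendsto_bound := hvv₀.add (tendsto_eLpNorm_sub_of_tendstoUniformlyOn measurableSet_Ioc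
    (measure_Ioc_lt_top (μ := volume)).ne 2 mean_unif)
  rw [add_zero] at tendsto_bound
  refine tendsto_of_tendsto_of_tendsto_of_le_of_le tendsto_const_nhds tendsto_bound
    (fun _ => zero_le) fun i => ?_
  refine le_of_eq_of_le (congrArg (eLpNorm · 2 _) ?_) (eLpNorm_sub_le
    ((hv i).sub hv₀).aestronglyMeasurable ((mean_meas i).sub hw₀_meas) one_le_two)
  ext s
  simp only [Pi.sub_apply, hmean]
  abel

theorem tendsto_sum_energy [CompleteSpace E] (ht : ∀ i, IsPartition (t i) (N i) a b)
    (hmesh : Tendsto (fun i => mesh (t i) (N i)) l (𝓝 0)) {x₀ : ι → E} {v x : ι → ℝ → E}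
    (hx : ∀ i, IsPrimitiveOn a b (x₀ i) (v i) (x i))
    (hv : ∀ i, IsConstOnCells (t i) (N i) (v i)) {v₀ : ℝ → E}
    (hv₀ : MemLp v₀ 2 (volume.restrict (Ioc a b)))
    (hvv₀ : Tendsto (fun i => eLpNorm (v i - v₀) 2 (volume.restrict (Ioc a b))) l (𝓝 0))
    {w : ι → ℝ → E} {w₀ : ℝ → E} (hw : TendstoUniformlyOn w w₀ l (Icc a b))
    (hw₀ : ContinuousOn w₀ (Icc a b)) (T : E →L[ℝ] F) :
    Tendsto (fun i => ∑ k ∈ Finset.range (N i), (t i (k + 1) - t i k) *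
        ‖T ((t i (k + 1) - t i k)⁻¹ • (x i (t i (k + 1)) - x i (t i k))
          - (1 / 2 : ℝ) • w i (t i k) - (1 / 2 : ℝ) • w i (t i (k + 1)))‖ ^ 2) l
      (𝓝 (∫ s in Ioc a b, ‖T (w₀ s - v₀ s)‖ ^ 2)) := by
  simp only [(hx _).sum_energy_eq_integral (ht _) (hv _)]
  simp only [← neg_sub (v₀ _) (w₀ _), map_neg, norm_neg]
  refine tendsto_integral_sq_norm_clm T (fun i => ?_)
    (hv₀.sub (memLp_Ioc_of_continuousOn hw₀ 2))
    (tendsto_eLpNorm_two_residual ht hmesh (fun i => (hv i).memLp_two (ht i)) hv₀ hvv₀ hw hw₀)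
  exact (((hv i).memLp_two (ht i)).sub
      ((ht i).memLp_two_cellIndex fun k => (1 / 2 : ℝ) • w i (t i k))).sub
    ((ht i).memLp_two_cellIndex fun k => (1 / 2 : ℝ) • w i (t i (k + 1)))

end Energy

section LogDet

variable {ι E F : Type*} {l : Filter ι} {t : ι → ℕ → ℝ} {N : ι → ℕ} {a b : ℝ}
  [NormedAddCommGroup E] [NormedSpace ℝ E] [NormedAddCommGroup F]

theorem tendsto_sum_smul_node [CompleteSpace E] (ht : ∀ i, IsPartition (t i) (N i) a b)
    (hmesh : Tendsto (fun i => mesh (t i) (N i)) l (𝓝 0)) {w : ι → ℝ → E} {w₀ : ℝ → E}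
    (hw : TendstoUniformlyOn w w₀ l (Icc a b)) (hw₀ : ContinuousOn w₀ (Icc a b)) {j : ℕ}
    (hj : j ≤ 1) :
    Tendsto (fun i => ∑ k ∈ Finset.range (N i), (t i (k + 1) - t i k) • w i (t i (k + j))) l
      (𝓝 (∫ s in Ioc a b, w₀ s)) := by
  simp only [(ht _).sum_smul_eq_integral_cellIndex fun k => w _ (t _ (k + j))]
  have hw₀_meas := (integrableOn_Ioc_of_continuousOn hw₀).aestronglyMeasurable
  exact tendsto_integral_of_L1' w₀ hw₀_meas
    (.of_forall fun i => (ht i).integrableOn_cellIndex fun k => w i (t i (k + j)))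
    (tendsto_eLpNorm_sub_of_tendstoUniformlyOn measurableSet_Ioc measure_Ioc_lt_top.ne 1
      (tendstoUniformlyOn_comp_node ht hmesh hw hw₀ hj))

theorem eventually_forall_step_smul (ht : ∀ i, IsPartition (t i) (N i) a b)
    (hmesh : Tendsto (fun i => mesh (t i) (N i)) l (𝓝 0)) {c : ι → ℕ → E} {M : ℝ}
    (hc : ∀ᶠ i in l, ∀ k < N i, ‖c i k‖ ≤ M) {P : E → Prop} (hP : ∀ᶠ B in 𝓝 0, P B) :
    ∀ᶠ i in l, ∀ k < N i, P ((t i (k + 1) - t i k) • c i k) := by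
  obtain ⟨ε, hε, hball⟩ := Metric.eventually_nhds_iff.1 hP
  have mesh_mul := hmesh.mul_const M
  rw [zero_mul] at mesh_mul
  filter_upwards [hc, mesh_mul.eventually_lt_const hε] with i hi hi_mesh k hk
  have step_pos := sub_pos.2 ((ht i).lt_succ k hk)
  apply hball
  calc dist ((t i (k + 1) - t i k) • c i k) 0 = (t i (k + 1) - t i k) * ‖c i k‖ := by
        rw [dist_zero_right, norm_smul, Real.norm_of_nonneg step_pos.le]
    _ ≤ mesh (t i) (N i) * M :=
        mul_le_mul (sub_le_mesh (t i) hk) (hi k hk) (norm_nonneg _)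
          (step_pos.le.trans (sub_le_mesh (t i) hk))
    _ < ε := hi_mesh

theorem tendsto_sum_step_of_isLittleO (ht : ∀ i, IsPartition (t i) (N i) a b)
    (hmesh : Tendsto (fun i => mesh (t i) (N i)) l (𝓝 0)) {c : ι → ℕ → E} {M : ℝ}
    (hc : ∀ᶠ i in l, ∀ k < N i, ‖c i k‖ ≤ M) {r : E → F} (hr : r =o[𝓝 0] fun B => B) :
    Tendsto (fun i => ∑ k ∈ Finset.range (N i), r ((t i (k + 1) - t i k) • c i k)) l (𝓝 0) := by
  rw [Metric.tendsto_nhds]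
  intro ε hε
  obtain ⟨η, hη, hη_lt⟩ := exists_pos_mul_lt hε (M * (b - a))
  filter_upwards [hc, eventually_forall_step_smul ht hmesh hc (hr.def hη)] with i hi hi_small
  rw [dist_zero_right]
  calc ‖∑ k ∈ Finset.range (N i), r ((t i (k + 1) - t i k) • c i k)‖
      ≤ ∑ k ∈ Finset.range (N i), η * ((t i (k + 1) - t i k) * M) := by
        refine norm_sum_le_of_le _ fun k hk => (hi_small k (Finset.mem_range.1 hk)).trans ?_
        have step_pos := sub_pos.2 ((ht i).lt_succ k (Finset.mem_range.1 hk))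
        rw [norm_smul, Real.norm_of_nonneg step_pos.le]
        gcongr
        exact hi k (Finset.mem_range.1 hk)
    _ = M * (b - a) * η := by
        rw [← Finset.mul_sum, ← Finset.sum_mul, (ht i).sum_sub_eq]
        ring
    _ < ε := hη_lt

theorem exists_eventually_forall_norm_le {X : Type*} [TopologicalSpace X] {K : Set X}
    (hK : IsCompact K) {w : ι → X → F} {w₀ : X → F} (hw : TendstoUniformlyOn w w₀ l K)
    (hw₀ : ContinuousOn w₀ K) : ∃ M, ∀ᶠ i in l, ∀ u ∈ K, ‖w i u‖ ≤ M := by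
  obtain ⟨M, hM⟩ := hK.exists_bound_of_continuousOn hw₀
  refine ⟨M + 1, ?_⟩
  filter_upwards [Metric.tendstoUniformlyOn_iff.1 hw 1 one_pos] with i hi u hu
  have close := hi u hu
  rw [dist_comm, dist_eq_norm] at close
  linarith [norm_le_norm_add_norm_sub (w₀ u) (w i u), hM u hu, norm_sub_rev (w₀ u) (w i u)]

theorem tendsto_sum_elog_det_one_add [FiniteDimensional ℝ E]
    (ht : ∀ i, IsPartition (t i) (N i) a b)
    (hmesh : Tendsto (fun i => mesh (t i) (N i)) l (𝓝 0)) {B : ι → ℝ → E →L[ℝ] E}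
    {B₀ : ℝ → E →L[ℝ] E} (hB : TendstoUniformlyOn B B₀ l (Icc a b))
    (hB₀ : ContinuousOn B₀ (Icc a b)) {j : ℕ} (hj : j ≤ 1) :
    Tendsto (fun i => ∑ k ∈ Finset.range (N i),
        elog (1 + (t i (k + 1) - t i k) • B i (t i (k + j))).det) l
      (𝓝 ((∫ s in Ioc a b, traceCLM ℝ E (B₀ s) : ℝ) : EReal)) := by
  obtain ⟨M, hM⟩ := exists_eventually_forall_norm_le isCompact_Icc hB hB₀
  have hc : ∀ᶠ i in l, ∀ k < N i, ‖B i (t i (k + j))‖ ≤ M :=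
    hM.mono fun i hi k hk => hi _ ((ht i).mem_Icc (by lia))
  have tendsto_trace := tendsto_sum_smul_node ht hmesh
    ((traceCLM ℝ E).uniformContinuous.comp_tendstoUniformlyOn hB)
    ((traceCLM ℝ E).continuous.comp_continuousOn hB₀) hj
  have tendsto_log_sub_trace := tendsto_sum_step_of_isLittleO ht hmesh hc
    log_det_one_add_sub_trace_isLittleO
  have tendsto_log := tendsto_log_sub_trace.add tendsto_trace
  rw [zero_add] at tendsto_log
  refine ((continuous_coe_real_ereal.tendsto _).comp tendsto_log).congr' ?_
  filter_upwards [eventually_forall_step_smul ht hmesh hc eventually_det_one_add_pos] with i hi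
  rw [sum_elog_of_pos fun k hk => hi k (Finset.mem_range.1 hk), Function.comp_apply,
    ← Finset.sum_add_distrib]
  simp only [Function.comp_apply, map_smul, sub_add_cancel]

theorem tendsto_sum_elog_det_one_sub_half [FiniteDimensional ℝ E]
    (ht : ∀ i, IsPartition (t i) (N i) a b)
    (hmesh : Tendsto (fun i => mesh (t i) (N i)) l (𝓝 0)) {A : ι → ℝ → E →L[ℝ] E}
    {A₀ : ℝ → E →L[ℝ] E} (hA : TendstoUniformlyOn A A₀ l (Icc a b))
    (hA₀ : ContinuousOn A₀ (Icc a b)) {j : ℕ} (hj : j ≤ 1) :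
    Tendsto (fun i => ∑ k ∈ Finset.range (N i),
        elog (1 - ((t i (k + 1) - t i k) / 2) • A i (t i (k + j))).det) l
      (𝓝 ((-(1 / 2 * ∫ s in Ioc a b, traceCLM ℝ E (A₀ s)) : ℝ) : EReal)) := by
  have hB : TendstoUniformlyOn (fun i s => (-(1 / 2) : ℝ) • A i s)
      (fun s => (-(1 / 2) : ℝ) • A₀ s) l (Icc a b) :=
    (uniformContinuous_const_smul (-(1 / 2) : ℝ)).comp_tendstoUniformlyOn hA
  have limit_eq : -(1 / 2 * ∫ s in Ioc a b, traceCLM ℝ E (A₀ s)) =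
      ∫ s in Ioc a b, traceCLM ℝ E ((-(1 / 2) : ℝ) • A₀ s) := by
    rw [← neg_mul, ← integral_const_mul]
    simp only [map_smul, smul_eq_mul]
  rw [limit_eq]
  have hB₀ : ContinuousOn (fun s => (-(1 / 2) : ℝ) • A₀ s) (Icc a b) := by fun_prop
  refine (tendsto_sum_elog_det_one_add ht hmesh hB hB₀ hj).congr fun i => ?_
  refine Finset.sum_congr rfl fun k _ => ?_
  congr 2
  module

end LogDet

section CoupledPaths

variable {ι E Z Θ : Type*} {l : Filter ι} {a b : ℝ} [NormedAddCommGroup E]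
  [NormedAddCommGroup Z] [NormedAddCommGroup Θ] {xh : ι → ℝ → E} {x : ℝ → E} {zh : ι → ℝ → Z}
  {z : ℝ → Z} {ϑ : ι → Θ} {θ : Θ}

theorem continuousOn_comp_paths {Y : Type*} [TopologicalSpace Y] {F : ℝ → E → Z → Θ → Y}
    (hF : Continuous fun p : ℝ × E × Z × Θ => F p.1 p.2.1 p.2.2.1 p.2.2.2) (θ : Θ)
    (hx : ContinuousOn x (Icc a b)) (hz : ContinuousOn z (Icc a b)) :
    ContinuousOn (fun s => F s (x s) (z s) θ) (Icc a b) :=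
  hF.comp_continuousOn (continuousOn_id.prodMk (hx.prodMk (hz.prodMk continuousOn_const)))

theorem tendstoUniformlyOn_comp_paths {Y : Type*} [UniformSpace Y] {F : ℝ → E → Z → Θ → Y}
    (hF : Continuous fun p : ℝ × E × Z × Θ => F p.1 p.2.1 p.2.2.1 p.2.2.2)
    (hx : ContinuousOn x (Icc a b)) (hz : ContinuousOn z (Icc a b))
    (hxh : TendstoUniformlyOn xh x l (Icc a b)) (hzh : TendstoUniformlyOn zh z l (Icc a b))
    (hϑ : Tendsto ϑ l (𝓝 θ)) :
    TendstoUniformlyOn (fun i s => F s (xh i s) (zh i s) (ϑ i)) (fun s => F s (x s) (z s) θ) l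
      (Icc a b) := by
  have curve_continuousOn : ContinuousOn (fun s => (s, x s, z s, θ)) (Icc a b) :=
    continuousOn_id.prodMk (hx.prodMk (hz.prodMk continuousOn_const))
  have time_unif : TendstoUniformlyOn (fun (_ : ι) (s : ℝ) => s) id l (Icc a b) :=
    fun _ hV => .of_forall fun _ _ _ => refl_mem_uniformity hV
  exact tendstoUniformlyOn_comp_of_isCompact hF (isCompact_Icc.image_of_continuousOn
    curve_continuousOn) (mapsTo_image _ _) (tendstoUniformlyOn_prodMk time_unif
      (tendstoUniformlyOn_prodMk hxh (tendstoUniformlyOn_prodMk hzh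
        (hϑ.tendstoUniformlyOn_const _))))

theorem tendstoUniformlyOn_trapezoidPath_of_lipschitzWith [NormedSpace ℝ Z] [CompleteSpace Z]
    {t : ι → ℕ → ℝ} {N : ι → ℕ} (ht : ∀ i, IsPartition (t i) (N i) a b)
    (hmesh : Tendsto (fun i => mesh (t i) (N i)) l (𝓝 0)) {h : ℝ → E → Z → Θ → Z}
    (hh : Continuous fun p : ℝ × E × Z × Θ => h p.1 p.2.1 p.2.2.1 p.2.2.2) {L : ℝ≥0}
    (hL : ∀ i, ∀ s ∈ Icc a b, ∀ ξ, LipschitzWith L fun y => h s ξ y (ϑ i))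
    (hx : ContinuousOn x (Icc a b)) (hxh : TendstoUniformlyOn xh x l (Icc a b))
    (hϑ : Tendsto ϑ l (𝓝 θ)) {z₀ : Z} (hz_cont : ContinuousOn z (Icc a b))
    (hz : IsPrimitiveOn a b z₀ (fun s => h s (x s) (z s) θ) z)
    (hzh : ∀ i, IsTrapezoidPath (t i) (N i) (fun s => h s (xh i s) (zh i s) (ϑ i)) (zh i))
    (hzh₀ : Tendsto (fun i => zh i a) l (𝓝 (z a))) : TendstoUniformlyOn zh z l (Icc a b) := by
  refine tendstoUniformlyOn_trapezoidPath (V := fun i s => h s (xh i s) (z s) (ϑ i)) ht hmesh hzh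
    hz (continuousOn_comp_paths hh θ hx hz_cont) L.coe_nonneg (fun i s hs => ?_)
    (tendstoUniformlyOn_comp_paths (zh := fun _ => z) hh hx hz_cont hxh
      (fun _ hV => .of_forall fun _ _ _ => refl_mem_uniformity hV) hϑ) hzh₀
  simpa only [dist_eq_norm] using (hL i s hs (xh i s)).dist_le_mul (zh i s) (z s)

/-- Continuity of a functional of two continuous paths on `[a, b]` and a parameter, for the supremum
norms. The paths are functions on `ℝ`, of which only the restriction to `[a, b]` is measured. -/
def SupContinuous (a b : ℝ) (ψ : (ℝ → E) → (ℝ → Z) → Θ → ℝ) : Prop :=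
  ∀ (x : ℝ → E) (z : ℝ → Z) (θ : Θ), ContinuousOn x (Icc a b) → ContinuousOn z (Icc a b) →
    ∀ ε > 0, ∃ δ > 0, ∀ (x' : ℝ → E) (z' : ℝ → Z) (θ' : Θ), ContinuousOn x' (Icc a b) →
      ContinuousOn z' (Icc a b) → (∀ t ∈ Icc a b, ‖x' t - x t‖ ≤ δ) →
      (∀ t ∈ Icc a b, ‖z' t - z t‖ ≤ δ) → ‖θ' - θ‖ ≤ δ → |ψ x' z' θ' - ψ x z θ| ≤ ε

theorem SupContinuous.tendsto {ψ : (ℝ → E) → (ℝ → Z) → Θ → ℝ} (hψ : SupContinuous a b ψ)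
    (hx_cont : ContinuousOn x (Icc a b)) (hz_cont : ContinuousOn z (Icc a b))
    (hxh_cont : ∀ i, ContinuousOn (xh i) (Icc a b))
    (hzh_cont : ∀ i, ContinuousOn (zh i) (Icc a b)) (hxh : TendstoUniformlyOn xh x l (Icc a b))
    (hzh : TendstoUniformlyOn zh z l (Icc a b)) (hϑ : Tendsto ϑ l (𝓝 θ)) :
    Tendsto (fun i => ψ (xh i) (zh i) (ϑ i)) l (𝓝 (ψ x z θ)) := by
  refine Metric.nhds_basis_closedBall.tendsto_right_iff.2 fun ε hε => ?_
  obtain ⟨δ, hδ, hψδ⟩ := hψ x z θ hx_cont hz_cont ε hε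
  rw [Metric.tendstoUniformlyOn_iff] at hxh hzh
  filter_upwards [hxh δ hδ, hzh δ hδ, Metric.tendsto_nhds.1 hϑ δ hδ] with i hi_x hi_z hi_θ
  simp only [dist_comm (x _), dist_comm (z _), dist_eq_norm] at hi_x hi_z hi_θ
  exact hψδ _ _ _ (hxh_cont i) (hzh_cont i) (fun s hs => (hi_x s hs).le)
    (fun s hs => (hi_z s hs).le) hi_θ.le

end CoupledPaths

section LogPosterior

variable {E F : Type*} [NormedAddCommGroup E] [NormedSpace ℝ E] [NormedAddCommGroup F]
  [NormedSpace ℝ F]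

/-- The Onsager–Machlup log-posterior `ℓ` of a path on `[a, b]` with derivative `v`, in terms of the
values `p` of the likelihood and `r` of the prior, and of the drift `w` and its Jacobian `A` along
the path. The operator `T` stands for `G⁻¹`. -/
noncomputable def logPosterior (a b : ℝ) (T : E →L[ℝ] F) (p r : ℝ≥0) (v w : ℝ → E)
    (A : ℝ → E →L[ℝ] E) : EReal :=
  elog p + elog r - ((1 / 2 * ∫ s in Ioc a b, ‖T (w s - v s)‖ ^ 2 : ℝ) : EReal)
    - ((1 / 2 * ∫ s in Ioc a b, LinearMap.trace ℝ E (A s) : ℝ) : EReal)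

/-- The trapezoidally-discretized log-posterior `ℓ̂` of a path `x` on the partition `t 0, …, t N`,
with `p`, `r`, `w`, `A` and `T` as for `logPosterior`. -/
noncomputable def discreteLogPosterior (t : ℕ → ℝ) (N : ℕ) (T : E →L[ℝ] F) (p r : ℝ≥0)
    (x w : ℝ → E) (A : ℝ → E →L[ℝ] E) : EReal :=
  elog p + elog r
    + ∑ k ∈ Finset.range N, elog (1 - ((t (k + 1) - t k) / 2) • A (t (k + 1))).det
    - ((1 / 2 * ∑ k ∈ Finset.range N, (t (k + 1) - t k) *
        ‖T ((t (k + 1) - t k)⁻¹ • (x (t (k + 1)) - x (t k)) - (1 / 2 : ℝ) • w (t k)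
          - (1 / 2 : ℝ) • w (t (k + 1)))‖ ^ 2 : ℝ) : EReal)

variable {ι : Type*} {l : Filter ι}

theorem tendsto_add_add_sub_coe {u u' S : ι → EReal} {u₀ u₀' : EReal} {e : ι → ℝ} {σ e₀ : ℝ}
    (hu : Tendsto u l (𝓝 u₀)) (hu' : Tendsto u' l (𝓝 u₀')) (hu₀ : u₀ ≠ ⊤) (hu₀' : u₀' ≠ ⊤)
    (hS : Tendsto S l (𝓝 ((-σ : ℝ) : EReal))) (he : Tendsto e l (𝓝 e₀)) :
    Tendsto (fun i => u i + u' i + S i - (e i : EReal)) l (𝓝 (u₀ + u₀' - e₀ - σ)) := by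
  have limit_eq : u₀ + u₀' - e₀ - σ = u₀ + u₀' + ((-σ : ℝ) : EReal) + ((-e₀ : ℝ) : EReal) := by
    simp only [EReal.coe_neg, sub_eq_add_neg]
    exact add_right_comm _ _ _
  have tendsto_neg : Tendsto (fun i => -(e i : EReal)) l (𝓝 ((-e₀ : ℝ) : EReal)) :=
    (continuous_coe_real_ereal.tendsto _).comp he.neg
  have add_real {w w' : ι → EReal} {w₀ : EReal} {c : ℝ} (hw : Tendsto w l (𝓝 w₀))
      (hw' : Tendsto w' l (𝓝 (c : EReal))) : Tendsto (fun i => w i + w' i) l (𝓝 (w₀ + c)) :=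
    (EReal.continuousAt_add (.inr (EReal.coe_ne_bot c)) (.inr (EReal.coe_ne_top c))).tendsto.comp
      (hw.prodMk_nhds hw')
  have add_log := (EReal.continuousAt_add (.inl hu₀) (.inr hu₀')).tendsto.comp
    (hu.prodMk_nhds hu')
  rw [limit_eq]
  exact add_real (add_real add_log hS) tendsto_neg

theorem tendsto_discreteLogPosterior [FiniteDimensional ℝ E] {a b : ℝ} {t : ι → ℕ → ℝ}
    {N : ι → ℕ} (ht : ∀ i, IsPartition (t i) (N i) a b)
    (hmesh : Tendsto (fun i => mesh (t i) (N i)) l (𝓝 0)) (T : E →L[ℝ] F) {p r : ι → ℝ≥0}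
    {p₀ r₀ : ℝ≥0} (hp : Tendsto p l (𝓝 p₀)) (hr : Tendsto r l (𝓝 r₀)) {x₀ : ι → E}
    {v x : ι → ℝ → E} (hx : ∀ i, IsPrimitiveOn a b (x₀ i) (v i) (x i))
    (hv : ∀ i, IsConstOnCells (t i) (N i) (v i)) {v₀ : ℝ → E}
    (hv₀ : MemLp v₀ 2 (volume.restrict (Ioc a b)))
    (hvv₀ : Tendsto (fun i => eLpNorm (v i - v₀) 2 (volume.restrict (Ioc a b))) l (𝓝 0))
    {w : ι → ℝ → E} {w₀ : ℝ → E} (hw : TendstoUniformlyOn w w₀ l (Icc a b))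
    (hw₀ : ContinuousOn w₀ (Icc a b)) {A : ι → ℝ → E →L[ℝ] E} {A₀ : ℝ → E →L[ℝ] E}
    (hA : TendstoUniformlyOn A A₀ l (Icc a b)) (hA₀ : ContinuousOn A₀ (Icc a b)) :
    Tendsto (fun i => discreteLogPosterior (t i) (N i) T (p i) (r i) (x i) (w i) (A i)) l
      (𝓝 (logPosterior a b T p₀ r₀ v₀ w₀ A₀)) := by
  have : CompleteSpace E := FiniteDimensional.complete ℝ E
  have tendsto_elog {c : ι → ℝ≥0} {c₀ : ℝ≥0} (hc : Tendsto c l (𝓝 c₀)) :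
      Tendsto (fun i => elog (c i)) l (𝓝 (elog c₀)) :=
    (continuous_elog.tendsto _).comp (NNReal.tendsto_coe.2 hc)
  exact tendsto_add_add_sub_coe (tendsto_elog hp) (tendsto_elog hr) (elog_ne_top _)
    (elog_ne_top _) (tendsto_sum_elog_det_one_sub_half ht hmesh hA hA₀ le_rfl)
    ((tendsto_sum_energy ht hmesh hx hv hv₀ hvv₀ hw hw₀ T).const_mul (1 / 2))

end LogPosterior

theorem stmt13_general {ι E F Z Θ : Type*} {l : Filter ι} [NormedAddCommGroup E] [NormedSpace ℝ E]
    [FiniteDimensional ℝ E] [NormedAddCommGroup F] [NormedSpace ℝ F] [NormedAddCommGroup Z]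
    [NormedSpace ℝ Z] [CompleteSpace Z] [NormedAddCommGroup Θ] {a b : ℝ}
    {t : ι → ℕ → ℝ} {N : ι → ℕ} (ht : ∀ i, IsPartition (t i) (N i) a b)
    (hmesh : Tendsto (fun i => mesh (t i) (N i)) l (𝓝 0))
    {f : ℝ → E → Z → Θ → E} (hf : Continuous fun p : ℝ × E × Z × Θ => f p.1 p.2.1 p.2.2.1 p.2.2.2)
    {h : ℝ → E → Z → Θ → Z} (hh : Continuous fun p : ℝ × E × Z × Θ => h p.1 p.2.1 p.2.2.1 p.2.2.2)
    {Dxf : ℝ → E → Z → Θ → E →L[ℝ] E}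
    (_hDxf : ∀ s ξ y c, HasFDerivAt (fun ξ' => f s ξ' y c) (Dxf s ξ y c) ξ)
    (hDxf_cont : Continuous fun p : ℝ × E × Z × Θ => Dxf p.1 p.2.1 p.2.2.1 p.2.2.2)
    {ψ : (ℝ → E) → (ℝ → Z) → Θ → ℝ≥0} (hψ : SupContinuous a b fun ξ y c => (ψ ξ y c : ℝ))
    {pr : E → Z → Θ → ℝ≥0} (hpr : Continuous fun p : E × Z × Θ => pr p.1 p.2.1 p.2.2)
    (T : E →L[ℝ] F) {x x' : ℝ → E} (hx' : MemLp x' 2 (volume.restrict (Ioc a b)))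
    (hx : IsPrimitiveOn a b (x a) x' x) {z₀ : Z} {θ : Θ} {z : ℝ → Z}
    (hz_cont : ContinuousOn z (Icc a b))
    (hz : IsPrimitiveOn a b z₀ (fun s => h s (x s) (z s) θ) z)
    {xh d : ι → ℝ → E} (hd : ∀ i, IsConstOnCells (t i) (N i) (d i))
    (hxh : ∀ i, IsPrimitiveOn a b (xh i a) (d i) (xh i)) {ζ : ι → Z} {ϑ : ι → Θ} {L : ℝ≥0}
    (hL : ∀ i, ∀ s ∈ Icc a b, ∀ ξ, LipschitzWith L fun y => h s ξ y (ϑ i))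
    (hconv : Tendsto (fun i => w2Norm a b (xh i a - x a) (d i - x') + ‖ζ i - z₀‖ + ‖ϑ i - θ‖) l
      (𝓝 0))
    {zh : ι → ℝ → Z} (hzh₀ : ∀ i, zh i a = ζ i)
    (hzh : ∀ i, IsTrapezoidPath (t i) (N i) (fun s => h s (xh i s) (zh i s) (ϑ i)) (zh i)) :
    Tendsto (fun i => discreteLogPosterior (t i) (N i) T (ψ (xh i) (zh i) (ϑ i))
        (pr (xh i a) (ζ i) (ϑ i)) (xh i) (fun s => f s (xh i s) (zh i s) (ϑ i))
        (fun s => Dxf s (xh i s) (zh i s) (ϑ i))) l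
      (𝓝 (logPosterior a b T (ψ x z θ) (pr (x a) z₀ θ) x' (fun s => f s (x s) (z s) θ)
        fun s => Dxf s (x s) (z s) θ)) := by
  obtain ⟨w2_tendsto, ζ_tendsto, ϑ_tendsto⟩ := tendsto_of_tendsto_w2Norm_add_add hconv
  have xh_left_tendsto : Tendsto (fun i => xh i a) l (𝓝 (x a)) :=
    tendsto_iff_norm_sub_tendsto_zero.2 <|
      squeeze_zero (fun _ => norm_nonneg _) (fun i => norm_le_w2Norm _ _) w2_tendsto
  have zh_left_tendsto : Tendsto (fun i => zh i a) l (𝓝 (z a)) :=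
    tendsto_iff_norm_sub_tendsto_zero.2 <|
      (tendsto_iff_norm_sub_tendsto_zero.1 ζ_tendsto).congr fun i => by
        rw [hzh₀, hz.left_eq (ht i).left_le_right]
  have hd_memLp (i : ι) := (hd i).memLp_two (ht i)
  have hx_cont := hx.continuousOn (hx'.integrable one_le_two)
  have xh_unif := tendstoUniformlyOn_of_w2Norm hxh hx hd_memLp hx' w2_tendsto
  have zh_unif := tendstoUniformlyOn_trapezoidPath_of_lipschitzWith ht hmesh hh hL hx_cont xh_unif
    ϑ_tendsto hz_cont hz hzh zh_left_tendsto
  have ψ_tendsto : Tendsto (fun i => ψ (xh i) (zh i) (ϑ i)) l (𝓝 (ψ x z θ)) :=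
    NNReal.tendsto_coe.1 <| hψ.tendsto hx_cont hz_cont
      (fun i => (hxh i).continuousOn ((hd_memLp i).integrable one_le_two))
      (fun i => (hzh i).continuousOn (ht i)) xh_unif zh_unif ϑ_tendsto
  have pr_tendsto : Tendsto (fun i => pr (xh i a) (ζ i) (ϑ i)) l (𝓝 (pr (x a) z₀ θ)) :=
    (hpr.tendsto (x a, z₀, θ)).comp
      (xh_left_tendsto.prodMk_nhds (ζ_tendsto.prodMk_nhds ϑ_tendsto))
  exact tendsto_discreteLogPosterior ht hmesh T ψ_tendsto pr_tendsto hxh hd hx'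
    (tendsto_eLpNorm_two_of_w2Norm (fun i => (hd_memLp i).sub hx') w2_tendsto)
    (tendstoUniformlyOn_comp_paths hf hx_cont hz_cont xh_unif zh_unif ϑ_tendsto)
    (continuousOn_comp_paths hf θ hx_cont hz_cont)
    (tendstoUniformlyOn_comp_paths hDxf_cont hx_cont hz_cont xh_unif zh_unif ϑ_tendsto)
    (continuousOn_comp_paths hDxf_cont θ hx_cont hz_cont)

/-- continuous convergence of the trapezoidally-discretized
log-posteriors: if `(x̂_i, ζ_i, ϑ_i) → (x, z₀, θ)` in `W²_n × ℝ^q × ℝ^m` with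
`ϑ_i ∈ S` and `x̂_i ∈ PL(𝒫_i)`, then `ℓ̂_i(x̂_i, ζ_i, ϑ_i) → ℓ(x, z₀, θ)` in `ℝ̄`.
Piecewise linear paths are encoded by their piecewise constant derivatives `d i`,
`W²` functions by function–derivative pairs, `ẑ_i` and `z` are the
trapezoidally-discretized clean-state paths resp. the solution of the clean-state
ODE, and `Dxf` is the Jacobian `∇ₓ f`. -/
theorem stmt13 {n q m : ℕ} (tf : ℝ) (htf : 0 < tf)
    -- nested partitions with vanishing mesh
    (N : ℕ → ℕ) (hN1 : ∀ i, 1 ≤ N i) (tP : ℕ → ℕ → ℝ)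
    (htP0 : ∀ i, tP i 0 = 0) (htPN : ∀ i, tP i (N i) = tf)
    (htPmono : ∀ i, ∀ k < N i, tP i k < tP i (k + 1))
    (hnested : ∀ i, ∀ k ≤ N i, ∃ k' ≤ N (i + 1), tP (i + 1) k' = tP i k)
    (hmesh : Tendsto (fun i => ⨆ k : Fin (N i), (tP i (k.1 + 1) - tP i k.1))
      atTop (nhds 0))
    -- closed parameter set
    (S : Set (EuclideanSpace ℝ (Fin m))) (hS : IsClosed S)
    -- dynamics and their regularity
    (f : ℝ → EuclideanSpace ℝ (Fin n) → EuclideanSpace ℝ (Fin q) →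
      EuclideanSpace ℝ (Fin m) → EuclideanSpace ℝ (Fin n))
    (h : ℝ → EuclideanSpace ℝ (Fin n) → EuclideanSpace ℝ (Fin q) →
      EuclideanSpace ℝ (Fin m) → EuclideanSpace ℝ (Fin q))
    (hfc : Continuous fun p : ℝ × EuclideanSpace ℝ (Fin n) × EuclideanSpace ℝ (Fin q) ×
      EuclideanSpace ℝ (Fin m) => f p.1 p.2.1 p.2.2.1 p.2.2.2)
    (hhc : Continuous fun p : ℝ × EuclideanSpace ℝ (Fin n) × EuclideanSpace ℝ (Fin q) ×
      EuclideanSpace ℝ (Fin m) => h p.1 p.2.1 p.2.2.1 p.2.2.2)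
    (ρf ρh : ℝ → ℝ)
    (hρ : Tendsto (fun ε => ρf ε + ρh ε) (nhdsWithin 0 (Ioi 0)) (nhds 0))
    (hfu : ∀ ε > (0:ℝ), ∀ t ∈ Icc (0:ℝ) tf, ∀ t' ∈ Icc (0:ℝ) tf,
      ∀ (a a' : EuclideanSpace ℝ (Fin n)) (b b' : EuclideanSpace ℝ (Fin q))
        (c c' : EuclideanSpace ℝ (Fin m)), c ∈ S → c' ∈ S →
      |t - t'| ≤ ε → ‖a - a'‖ ≤ ε → ‖b - b'‖ ≤ ε → ‖c - c'‖ ≤ ε →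
      ‖f t a b c - f t' a' b' c'‖ ≤ ρf ε)
    (hhu : ∀ ε > (0:ℝ), ∀ t ∈ Icc (0:ℝ) tf, ∀ t' ∈ Icc (0:ℝ) tf,
      ∀ (a a' : EuclideanSpace ℝ (Fin n)) (b b' : EuclideanSpace ℝ (Fin q))
        (c c' : EuclideanSpace ℝ (Fin m)), c ∈ S → c' ∈ S →
      |t - t'| ≤ ε → ‖a - a'‖ ≤ ε → ‖b - b'‖ ≤ ε → ‖c - c'‖ ≤ ε →
      ‖h t a b c - h t' a' b' c'‖ ≤ ρh ε)
    (Lf Lh : ℝ) (hLf : 0 < Lf) (hLh : 0 < Lh)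
    (hfLip : ∀ θ' ∈ S, ∀ t ∈ Icc (0:ℝ) tf,
      ∀ (a a' : EuclideanSpace ℝ (Fin n)) (b b' : EuclideanSpace ℝ (Fin q)),
      ‖f t a b θ' - f t a' b' θ'‖ ≤ Lf * (‖a - a'‖ + ‖b - b'‖))
    (hhLip : ∀ θ' ∈ S, ∀ t ∈ Icc (0:ℝ) tf,
      ∀ (a a' : EuclideanSpace ℝ (Fin n)) (b b' : EuclideanSpace ℝ (Fin q)),
      ‖h t a b θ' - h t a' b' θ'‖ ≤ Lh * (‖a - a'‖ + ‖b - b'‖))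
    (hmeshLip : ∀ i, ∀ k < N i, (Lf + Lh) * (tP i (k + 1) - tP i k) < 2)
    -- the Jacobian of `f` with respect to its second argument
    (Dxf : ℝ → EuclideanSpace ℝ (Fin n) → EuclideanSpace ℝ (Fin q) →
      EuclideanSpace ℝ (Fin m) →
      (EuclideanSpace ℝ (Fin n) →L[ℝ] EuclideanSpace ℝ (Fin n)))
    (hDxf : ∀ (t : ℝ) (a : EuclideanSpace ℝ (Fin n)) (b : EuclideanSpace ℝ (Fin q))
      (c : EuclideanSpace ℝ (Fin m)), HasFDerivAt (fun ξ => f t ξ b c) (Dxf t a b c) a)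
    (hDxfc : Continuous fun p : ℝ × EuclideanSpace ℝ (Fin n) ×
      EuclideanSpace ℝ (Fin q) × EuclideanSpace ℝ (Fin m) =>
      Dxf p.1 p.2.1 p.2.2.1 p.2.2.2)
    -- measurement likelihood: nonnegative, continuous w.r.t. the supremum norms
    (ψ : (ℝ → EuclideanSpace ℝ (Fin n)) → (ℝ → EuclideanSpace ℝ (Fin q)) →
      EuclideanSpace ℝ (Fin m) → ℝ)
    (hψ0 : ∀ a b c, 0 ≤ ψ a b c)
    (hψc : ∀ (a : ℝ → EuclideanSpace ℝ (Fin n)) (b : ℝ → EuclideanSpace ℝ (Fin q))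
      (c : EuclideanSpace ℝ (Fin m)), ContinuousOn a (Icc 0 tf) →
      ContinuousOn b (Icc 0 tf) → ∀ ε > (0:ℝ), ∃ δ > (0:ℝ),
      ∀ (a' : ℝ → EuclideanSpace ℝ (Fin n)) (b' : ℝ → EuclideanSpace ℝ (Fin q))
        (c' : EuclideanSpace ℝ (Fin m)), ContinuousOn a' (Icc 0 tf) →
        ContinuousOn b' (Icc 0 tf) →
        (∀ t ∈ Icc (0:ℝ) tf, ‖a' t - a t‖ ≤ δ) →
        (∀ t ∈ Icc (0:ℝ) tf, ‖b' t - b t‖ ≤ δ) → ‖c' - c‖ ≤ δ →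
        |ψ a' b' c' - ψ a b c| ≤ ε)
    -- prior: nonnegative, continuous, vanishing outside `int S`
    (pr : EuclideanSpace ℝ (Fin n) → EuclideanSpace ℝ (Fin q) →
      EuclideanSpace ℝ (Fin m) → ℝ)
    (hpr0 : ∀ a b c, 0 ≤ pr a b c)
    (hprc : Continuous fun p : EuclideanSpace ℝ (Fin n) × EuclideanSpace ℝ (Fin q) ×
      EuclideanSpace ℝ (Fin m) => pr p.1 p.2.1 p.2.2)
    (hprv : ∀ a b c, c ∉ interior S → pr a b c = 0)
    -- invertible diffusion matrix
    (G : EuclideanSpace ℝ (Fin n) ≃L[ℝ] EuclideanSpace ℝ (Fin n))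
    -- the limit point `(x, z₀, θ)` with `θ ∈ S`
    (x x' : ℝ → EuclideanSpace ℝ (Fin n))
    (hInt : IntegrableOn x' (Icc 0 tf))
    (hL2 : IntegrableOn (fun t => ‖x' t‖ ^ 2) (Icc 0 tf))
    (hAC : ∀ t ∈ Icc (0:ℝ) tf, x t = x 0 + ∫ s in Ioc (0:ℝ) t, x' s)
    (z0 : EuclideanSpace ℝ (Fin q))
    (θ : EuclideanSpace ℝ (Fin m)) (hθS : θ ∈ S)
    -- the solution of the clean-state ODE at the limit point
    (z : ℝ → EuclideanSpace ℝ (Fin q)) (hzc : ContinuousOn z (Icc 0 tf))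
    (hz : ∀ t ∈ Icc (0:ℝ) tf, z t = z0 + ∫ s in Ioc (0:ℝ) t, h s (x s) (z s) θ)
    -- the approximating sequence, `x̂_i ∈ PL(𝒫_i)` with derivative `d i`, `ϑ_i ∈ S`
    (xh d : ℕ → ℝ → EuclideanSpace ℝ (Fin n))
    (hdpc : ∀ i, ∀ k < N i, ∃ b : EuclideanSpace ℝ (Fin n),
      ∀ s ∈ Ico (tP i k) (tP i (k + 1)), d i s = b)
    (hxhAC : ∀ i, ∀ s ∈ Icc (0:ℝ) tf, xh i s = xh i 0 + ∫ u in Ioc (0:ℝ) s, d i u)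
    (ζ : ℕ → EuclideanSpace ℝ (Fin q)) (ϑ : ℕ → EuclideanSpace ℝ (Fin m))
    (hϑS : ∀ i, ϑ i ∈ S)
    (hconv : Tendsto (fun i =>
      Real.sqrt (‖xh i 0 - x 0‖ ^ 2 + ∫ s in Ioc (0:ℝ) tf, ‖d i s - x' s‖ ^ 2)
      + ‖ζ i - z0‖ + ‖ϑ i - θ‖) atTop (nhds 0))
    -- the associated trapezoidally-discretized clean-state paths
    (zh : ℕ → ℝ → EuclideanSpace ℝ (Fin q))
    (hzh0 : ∀ i, zh i 0 = ζ i)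
    (hzhrec : ∀ i, ∀ k < N i, ∀ s ∈ Ioc (tP i k) (tP i (k + 1)),
      zh i s = zh i (tP i k) + ((s - tP i k) / 2) •
        (h (tP i k) (xh i (tP i k)) (zh i (tP i k)) (ϑ i) +
         h (tP i (k + 1)) (xh i (tP i (k + 1))) (zh i (tP i (k + 1))) (ϑ i))) :
    Tendsto (fun i =>
      elog (ψ (xh i) (zh i) (ϑ i)) + elog (pr (xh i 0) (ζ i) (ϑ i))
        + (∑ k ∈ Finset.range (N i), elog (LinearMap.det
            (ContinuousLinearMap.toLinearMap
              ((1 : EuclideanSpace ℝ (Fin n) →L[ℝ] EuclideanSpace ℝ (Fin n))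
                - ((tP i (k + 1) - tP i k) / 2) •
                  Dxf (tP i (k + 1)) (xh i (tP i (k + 1))) (zh i (tP i (k + 1))) (ϑ i)))))
        - ((((1:ℝ) / 2) * ∑ k ∈ Finset.range (N i), (tP i (k + 1) - tP i k) *
            ‖G.symm ((tP i (k + 1) - tP i k)⁻¹ • (xh i (tP i (k + 1)) - xh i (tP i k))
              - ((1:ℝ) / 2) • f (tP i k) (xh i (tP i k)) (zh i (tP i k)) (ϑ i)
              - ((1:ℝ) / 2) •
                f (tP i (k + 1)) (xh i (tP i (k + 1))) (zh i (tP i (k + 1))) (ϑ i))‖ ^ 2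
            : ℝ) : EReal))
      atTop
      (nhds (elog (ψ x z θ) + elog (pr (x 0) z0 θ)
        - ((((1:ℝ) / 2) * ∫ t in Ioc (0:ℝ) tf,
            ‖G.symm (f t (x t) (z t) θ - x' t)‖ ^ 2 : ℝ) : EReal)
        - ((((1:ℝ) / 2) * ∫ t in Ioc (0:ℝ) tf,
            LinearMap.trace ℝ (EuclideanSpace ℝ (Fin n))
              (ContinuousLinearMap.toLinearMap (Dxf t (x t) (z t) θ)) : ℝ) : EReal))) := by
  have hx'_memLp : MemLp x' 2 (volume.restrict (Ioc 0 tf)) :=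
    (memLp_two_iff_integrable_sq_norm
      (hInt.mono_set Ioc_subset_Icc_self).aestronglyMeasurable).2
      (hL2.mono_set Ioc_subset_Icc_self)
  lift Lh to ℝ≥0 using hLh.le
  lift ψ to (ℝ → EuclideanSpace ℝ (Fin n)) → (ℝ → EuclideanSpace ℝ (Fin q)) →
    EuclideanSpace ℝ (Fin m) → ℝ≥0 using hψ0
  lift pr to EuclideanSpace ℝ (Fin n) → EuclideanSpace ℝ (Fin q) →
    EuclideanSpace ℝ (Fin m) → ℝ≥0 using hpr0
  have h_lipschitz (i : ℕ) (s : ℝ) (hs : s ∈ Icc 0 tf) (ξ : EuclideanSpace ℝ (Fin n)) :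
      LipschitzWith Lh fun y => h s ξ y (ϑ i) :=
    .of_dist_le_mul fun y y' => by
      simpa [dist_eq_norm] using hhLip (ϑ i) (hϑS i) s hs ξ ξ y y'
  exact (stmt13_general (fun i => ⟨htP0 i, htPN i, htPmono i⟩) hmesh hfc hhc hDxf hDxfc hψc
    (NNReal.isEmbedding_coe.continuous_iff.2 hprc) G.symm.toContinuousLinearMap hx'_memLp hAC hzc
    hz hdpc hxhAC h_lipschitz hconv hzh0 hzhrec :)
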